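/- arXiv:1301.1735 — 3 statements merged into one kernel-verified Lean document; each statement's English description precedes it below -/
import Mathlib

section
/- Hobson coupling formula: for every ν ∈ ℂ and θ₁, θ₂ ∈ [0, π), if θ₁ + θ₂ ≤ π then (1/(2π)) ∫_0^{2π} P_ν(cos θ₁ cos θ₂ + sin θ₁ sin θ₂ cos φ) dφ = P_ν(cos θ₁) P_ν(cos θ₂), while if θ₁ + θ₂ ≥ π then (1/(2π)) ∫_0^{2π} P_ν(cos θ₁ cos θ₂ + sin θ₁ sin θ₂ cos φ) dφ = P_ν(−cos θ₁) P_ν(−cos θ₂). -/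
open Real MeasureTheory intervalIntegral

/-- Legendre function of the first kind of complex degree `ν`, defined on `(-1, 1]`
via the Mehler–Dirichlet integral. -/
noncomputable def legendreP (ν : ℂ) (x : ℝ) : ℂ :=
  if x = 1 then 1
  else ((2 / π : ℝ) : ℂ) *
    ∫ β in (0:ℝ)..(Real.arccos x),
      Complex.cos ((2*ν + 1) * (β:ℂ) / 2) / ((Real.sqrt (2 * (Real.cos β - x)) : ℝ) : ℂ)

/-!
Substituting `cos β = 1 - 2 sin² A` in the Mehler–Dirichlet integral shows that `P_ν (1 - 2 z)`
is the mean of `K_ν (z sin² α)` over `α`, where the kernel `K_ν` is given by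
`K_ν (sin² t) = cos ((2ν + 1) t) / cos t`. Through the spherical law of cosines, the circle average
in the coupling formula becomes the integral of `K_ν` against a measure on `[0, 1]`. The addition
formula for the cosine does the same for the product, where `θ₁ + θ₂ ≤ π` makes the second measure
positive. Neither measure depends on `ν`. For `ν = N` a natural number, `K_N` is a polynomial of
degree `N` and the two integrals agree by the classical formula for Legendre polynomials; hence the
two measures have the same moments and coincide, and the formula follows for all `ν`. The case
`θ₁ + θ₂ ≥ π` is reduced to this one by `θᵢ ↦ π - θᵢ`.

The classical formula is itself algebraic: the circle average of the `n`-th power of `sin² (δ/2)`,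
`δ` the third side, is a polynomial in `x = sin² (θ₁/2)` and `y = sin² (θ₂/2)` on which the Legendre
operators in `x` and in `y` agree, so it is determined by its value at `y = 0`.
-/

namespace HobsonCoupling

section LegendreOperator

open Polynomial Finset

/-- The Legendre operator `p ↦ (x (1 - x) p')'` on the interval `[0, 1]`. -/
noncomputable def legendreOp : ℤ[X] →ₗ[ℤ] ℤ[X] :=
  derivative ∘ₗ LinearMap.mulLeft ℤ (X * (1 - X)) ∘ₗ derivative

lemma legendreOp_apply (p : ℤ[X]) : legendreOp p = derivative (X * (1 - X) * derivative p) :=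
  rfl

lemma coeff_legendreOp (p : ℤ[X]) (j : ℕ) :
    (legendreOp p).coeff j = (j + 1) ^ 2 * p.coeff (j + 1) - j * (j + 1) * p.coeff j := by
  have expand : X * (1 - X) * derivative p = X * derivative p - X * (X * derivative p) := by ring
  rw [legendreOp_apply, expand, coeff_derivative, coeff_sub, coeff_X_mul, coeff_X_mul,
    coeff_derivative]
  cases j with
  | zero => simp
  | succ j => rw [coeff_X_mul, coeff_derivative]; push_cast; ring

lemma legendreOp_comp_one_sub_X (p : ℤ[X]) :
    legendreOp (p.comp (1 - X)) = (legendreOp p).comp (1 - X) := by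
  simp only [legendreOp_apply, derivative_comp, derivative_mul, derivative_sub, derivative_one,
    derivative_X, mul_comp, add_comp, sub_comp, zero_comp, one_comp, X_comp, derivative_zero]
  ring

lemma coeff_shiftedLegendre_succ (N k : ℕ) :
    ((k : ℤ) + 1) ^ 2 * (shiftedLegendre N).coeff (k + 1) =
      (k * (k + 1) - N * (N + 1)) * (shiftedLegendre N).coeff k := by
  have lower : (N.choose (k + 1) : ℤ) * (k + 1) = N.choose k * (N - k) := by
    rcases le_or_gt k N with h | h
    · rw [← Nat.cast_sub h]; exact_mod_cast Nat.choose_succ_right_eq N k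
    · simp [Nat.choose_eq_zero_of_lt h, Nat.choose_eq_zero_of_lt (h.trans (Nat.lt_succ_self k))]
  have upper : ((N + (k + 1)).choose N : ℤ) * (k + 1) = (N + k + 1) * (N + k).choose N := by
    have h := Nat.choose_mul_succ_eq (N + k) N
    rw [show N + k + 1 - N = k + 1 by omega] at h
    rw [← add_assoc, mul_comm _ ((N + k).choose N : ℤ)]
    exact_mod_cast h.symm
  rw [coeff_shiftedLegendre, coeff_shiftedLegendre]
  linear_combination (-1) ^ (k + 1) * ((k + 1) * (N + (k + 1)).choose N * lower
    + N.choose k * (N - k) * upper)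

lemma legendreOp_shiftedLegendre (N : ℕ) :
    legendreOp (shiftedLegendre N) = (-(N * (N + 1)) : ℤ) • shiftedLegendre N := by
  ext j
  rw [coeff_legendreOp, coeff_smul, coeff_shiftedLegendre_succ, smul_eq_mul]
  ring

/-- The Laplacian of the path `0, 1, …, n` with weight `k (n + 1 - k)` on the edge from `k - 1`
to `k`. The weights of the two outer edges vanish, so the values of `a` off the path (among them
`a (0 - 1)`, which truncated subtraction turns into `a 0`) do not matter. -/
def pathLaplacian {M : Type*} [AddCommGroup M] (n : ℕ) (a : ℕ → M) (k : ℕ) : M :=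
  (((k : ℤ) + 1) * (n - k)) • (a (k + 1) - a k) - ((k : ℤ) * (n + 1 - k)) • (a k - a (k - 1))

lemma pathLaplacian_map {M M' : Type*} [AddCommGroup M] [AddCommGroup M'] (f : M →+ M') (n : ℕ)
    (a : ℕ → M) (k : ℕ) : f (pathLaplacian n a k) = pathLaplacian n (fun i => f (a i)) k := by
  simp only [pathLaplacian, map_sub, map_zsmul]

lemma sum_smul_pathLaplacian {M : Type*} [AddCommGroup M] (n : ℕ) (a : ℕ → ℤ) (b : ℕ → M) :
    ∑ k ∈ range (n + 1), a k • pathLaplacian n b k =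
      ∑ k ∈ range (n + 1), pathLaplacian n a k • b k := by
  let flux (k : ℕ) : M := ((k : ℤ) * (n + 1 - k)) • (a (k - 1) • b k - a k • b (k - 1))
  have telescope (k : ℕ) :
      a k • pathLaplacian n b k - pathLaplacian n a k • b k = flux (k + 1) - flux k := by
    simp only [flux, pathLaplacian, Nat.add_sub_cancel]
    push_cast
    module
  rw [← sub_eq_zero, ← sum_sub_distrib, sum_congr rfl fun k _ => telescope k, sum_range_sub]
  simp [flux]

lemma succ_mul_X_mul_bernsteinPolynomial (n k : ℕ) :
    (n + 1 : ℤ[X]) * (X * bernsteinPolynomial ℤ n k) =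
      (k + 1 : ℤ[X]) * bernsteinPolynomial ℤ (n + 1) (k + 1) := by
  have h : (n + 1 : ℤ[X]) * n.choose k = (n + 1).choose (k + 1) * (k + 1) := by
    exact_mod_cast Nat.add_one_mul_choose_eq n k
  rw [bernsteinPolynomial, bernsteinPolynomial, Nat.add_sub_add_right]
  linear_combination X ^ (k + 1) * (1 - X) ^ (n - k) * h

lemma succ_mul_one_sub_X_mul_bernsteinPolynomial {n k : ℕ} (hk : k ≤ n) :
    (n + 1 : ℤ[X]) * ((1 - X) * bernsteinPolynomial ℤ n k) =
      (n + 1 - k : ℤ[X]) * bernsteinPolynomial ℤ (n + 1) k := by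
  have h : (n.choose k : ℤ[X]) * (n + 1) = (n + 1).choose k * (n + 1 - k) := by
    rw [← Nat.cast_add_one, ← Nat.cast_sub (Nat.le_add_right_of_le hk)]
    exact_mod_cast Nat.choose_mul_succ_eq n k
  rw [bernsteinPolynomial, bernsteinPolynomial, Nat.sub_add_comm hk]
  linear_combination X ^ k * (1 - X) ^ (n - k + 1) * h

lemma X_mul_one_sub_X_mul_derivative_bernsteinPolynomial {n k : ℕ} (hk : k ≤ n) :
    X * (1 - X) * derivative (bernsteinPolynomial ℤ n k) =
      ((k : ℤ[X]) * (1 - X) - (n - k : ℤ[X]) * X) * bernsteinPolynomial ℤ n k := by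
  obtain ⟨m, rfl⟩ := Nat.exists_eq_add_of_le hk
  rw [bernsteinPolynomial, Nat.add_sub_cancel_left]
  cases k <;> cases m <;>
    simp [derivative_mul, derivative_pow] <;> ring

lemma succ_mul_X_mul_one_sub_X_mul_derivative_bernsteinPolynomial {n k : ℕ} (hk : k ≤ n) :
    (n + 1 : ℤ[X]) * (X * (1 - X) * derivative (bernsteinPolynomial ℤ n k)) =
      (n + 1 - k : ℤ[X]) * ((k : ℤ[X]) * bernsteinPolynomial ℤ (n + 1) k) -
        (n - k : ℤ[X]) * (((k + 1 : ℕ) : ℤ[X]) * bernsteinPolynomial ℤ (n + 1) (k + 1)) := by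
  rw [X_mul_one_sub_X_mul_derivative_bernsteinPolynomial hk]
  push_cast
  linear_combination (k : ℤ[X]) * succ_mul_one_sub_X_mul_bernsteinPolynomial hk
    - (n - k : ℤ[X]) * succ_mul_X_mul_bernsteinPolynomial n k

lemma mul_derivative_bernsteinPolynomial_succ (n k : ℕ) :
    (k : ℤ[X]) * derivative (bernsteinPolynomial ℤ (n + 1) k) =
      k * (n + 1) * (bernsteinPolynomial ℤ n (k - 1) - bernsteinPolynomial ℤ n k) := by
  cases k with
  | zero => simp
  | succ k => rw [bernsteinPolynomial.derivative_succ, Nat.add_sub_cancel]; push_cast; ring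

lemma legendreOp_bernsteinPolynomial {n k : ℕ} (hk : k ≤ n) :
    legendreOp (bernsteinPolynomial ℤ n k) = pathLaplacian n (bernsteinPolynomial ℤ n) k := by
  have hn : (n + 1 : ℤ[X]) ≠ 0 := by exact_mod_cast n.succ_ne_zero
  apply mul_left_cancel₀ hn
  have h := congrArg (derivative (R := ℤ))
    (succ_mul_X_mul_one_sub_X_mul_derivative_bernsteinPolynomial hk)
  have lower := mul_derivative_bernsteinPolynomial_succ n k
  have upper := mul_derivative_bernsteinPolynomial_succ n (k + 1)
  rw [derivative_mul, ← legendreOp_apply] at h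
  simp only [derivative_mul, derivative_sub, derivative_add, derivative_one, derivative_natCast,
    zero_mul, add_zero, sub_zero, zero_add, lower, upper] at h
  rw [h, pathLaplacian]
  simp only [zsmul_eq_mul, Nat.add_sub_cancel]
  push_cast
  ring

/-- The coefficient of `y ^ j` in `∑ k, b n k (x) * b n k (1 - y)`, a polynomial in `x`; here
`b n k` is the Bernstein polynomial. -/
noncomputable def bernsteinKernelCoeff (n j : ℕ) : ℤ[X] :=
  ∑ k ∈ range (n + 1), ((bernsteinPolynomial ℤ n k).comp (1 - X)).coeff j •
    bernsteinPolynomial ℤ n k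

lemma bernsteinKernelCoeff_zero (n : ℕ) : bernsteinKernelCoeff n 0 = X ^ n := by
  have coeff_zero (k : ℕ) :
      ((bernsteinPolynomial ℤ n k).comp (1 - X)).coeff 0 = if k = n then 1 else 0 := by
    rw [coeff_zero_eq_eval_zero, eval_comp, ← bernsteinPolynomial.eval_at_1]
    simp
  simp only [bernsteinKernelCoeff, coeff_zero, ite_smul, one_smul, zero_smul]
  simp [bernsteinPolynomial]

-- Both sides are the path Laplacian, moved from one Bernstein factor to the other.
lemma legendreOp_bernsteinKernelCoeff (n j : ℕ) :
    legendreOp (bernsteinKernelCoeff n j) =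
      ((j + 1) ^ 2 : ℤ) • bernsteinKernelCoeff n (j + 1) -
        (j * (j + 1) : ℤ) • bernsteinKernelCoeff n j := by
  have coeff_laplacian (k : ℕ) (hk : k ≤ n) :
      pathLaplacian n (fun i => ((bernsteinPolynomial ℤ n i).comp (1 - X)).coeff j) k =
        (legendreOp ((bernsteinPolynomial ℤ n k).comp (1 - X))).coeff j := by
    rw [legendreOp_comp_one_sub_X, legendreOp_bernsteinPolynomial hk]
    let coeffCompOneSub : ℤ[X] →+ ℤ :=
      (lcoeff ℤ j).toAddMonoidHom.comp (compRingHom (1 - X)).toAddMonoidHom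
    exact (pathLaplacian_map coeffCompOneSub n _ k).symm
  calc legendreOp (bernsteinKernelCoeff n j)
      = ∑ k ∈ range (n + 1), ((bernsteinPolynomial ℤ n k).comp (1 - X)).coeff j •
          pathLaplacian n (bernsteinPolynomial ℤ n) k := by
        simp only [bernsteinKernelCoeff, map_sum, map_smul]
        exact sum_congr rfl fun k hk => by
          rw [legendreOp_bernsteinPolynomial (mem_range_succ_iff.1 hk)]
    _ = ∑ k ∈ range (n + 1), (legendreOp ((bernsteinPolynomial ℤ n k).comp (1 - X))).coeff j •
          bernsteinPolynomial ℤ n k := by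
        rw [sum_smul_pathLaplacian]
        exact sum_congr rfl fun k hk => by rw [coeff_laplacian k (mem_range_succ_iff.1 hk)]
    _ = _ := by
        simp only [bernsteinKernelCoeff, coeff_legendreOp, sub_smul, mul_smul, smul_sum,
          sum_sub_distrib]

lemma sum_coeff_shiftedLegendre_smul_bernsteinKernelCoeff (N j : ℕ) :
    ∑ n ∈ range (N + 1), (shiftedLegendre N).coeff n • bernsteinKernelCoeff n j =
      (shiftedLegendre N).coeff j • shiftedLegendre N := by
  induction j with
  | zero =>
    simp only [bernsteinKernelCoeff_zero, coeff_shiftedLegendre N 0]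
    conv_rhs => rw [(shiftedLegendre N).as_sum_range, natDegree_shiftedLegendre]
    simp [← smul_X_eq_monomial]
  | succ j ih =>
    have h := congrArg legendreOp ih
    simp only [map_sum, map_zsmul, legendreOp_bernsteinKernelCoeff, legendreOp_shiftedLegendre,
      smul_sub, sum_sub_distrib] at h
    have pull (c : ℤ) (i : ℕ) :
        ∑ n ∈ range (N + 1), (shiftedLegendre N).coeff n • c • bernsteinKernelCoeff n i =
          c • ∑ n ∈ range (N + 1), (shiftedLegendre N).coeff n • bernsteinKernelCoeff n i := by
      rw [smul_sum]
      exact sum_congr rfl fun n _ => smul_comm _ _ _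
    rw [pull, pull, ih, sub_eq_iff_eq_add] at h
    have hj : ((j : ℤ) + 1) ^ 2 ≠ 0 := by positivity
    apply smul_right_injective _ hj
    dsimp only
    rw [h, smul_smul _ ((shiftedLegendre N).coeff (j + 1)), coeff_shiftedLegendre_succ]
    module

lemma sum_bernsteinKernelCoeff_mul_pow {R : Type*} [CommRing R] {n N : ℕ} (h : n ≤ N) (x y : R) :
    ∑ j ∈ range (N + 1), aeval x (bernsteinKernelCoeff n j) * y ^ j =
      ∑ k ∈ range (n + 1), (n.choose k : R) ^ 2 * (x * (1 - y)) ^ k * (y * (1 - x)) ^ (n - k) := by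
  have expand (k : ℕ) (hk : k ≤ n) :
      ∑ j ∈ range (N + 1), (((bernsteinPolynomial ℤ n k).comp (1 - X)).coeff j : R) * y ^ j =
        n.choose k * (1 - y) ^ k * y ^ (n - k) := by
    have degree_lt : ((bernsteinPolynomial ℤ n k).comp (1 - X)).natDegree < N + 1 := by
      rw [bernsteinPolynomial.flip _ _ _ hk, bernsteinPolynomial, Nat.lt_succ_iff]
      compute_degree
      omega
    have h := aeval_eq_sum_range' degree_lt y
    simp only [zsmul_eq_mul] at h
    rw [← h]
    simp [bernsteinPolynomial]
  simp only [bernsteinKernelCoeff, map_sum, map_mul, map_intCast, sum_mul, zsmul_eq_mul]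
  rw [sum_comm]
  refine sum_congr rfl fun k hk => ?_
  simp only [mul_right_comm _ (aeval x _), ← sum_mul, expand k (mem_range_succ_iff.1 hk)]
  simp only [bernsteinPolynomial, map_mul, map_pow, map_sub, map_one, map_natCast, aeval_X, mul_pow]
  ring

theorem sum_coeff_shiftedLegendre_mul_bernstein {R : Type*} [CommRing R] (N : ℕ) (x y : R) :
    ∑ n ∈ range (N + 1), ((shiftedLegendre N).coeff n : R) *
        ∑ k ∈ range (n + 1), (n.choose k : R) ^ 2 * (x * (1 - y)) ^ k * (y * (1 - x)) ^ (n - k) =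
      aeval x (shiftedLegendre N) * aeval y (shiftedLegendre N) := by
  have h (j : ℕ) := congrArg (aeval x) (sum_coeff_shiftedLegendre_smul_bernsteinKernelCoeff N j)
  simp only [map_sum, map_mul, map_intCast, zsmul_eq_mul] at h
  calc _ = ∑ j ∈ range (N + 1), (∑ n ∈ range (N + 1), ((shiftedLegendre N).coeff n : R) *
            aeval x (bernsteinKernelCoeff n j)) * y ^ j := by
        simp only [sum_mul]
        rw [sum_comm]
        refine sum_congr rfl fun n hn => ?_
        rw [← sum_bernsteinKernelCoeff_mul_pow (mem_range_succ_iff.1 hn), mul_sum]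
        simp only [mul_assoc]
    _ = _ := by
        simp only [h]
        rw [aeval_eq_sum_range (p := shiftedLegendre N) y, natDegree_shiftedLegendre, mul_sum]
        exact sum_congr rfl fun j _ => by rw [zsmul_eq_mul]; ring

end LegendreOperator

section ShiftedChebyshev

open Polynomial Finset

/-- The shifted Chebyshev polynomial of the third kind: `x ↦ V_N (1 - 2 x)`, where
`V_N (cos β) = cos ((N + 1/2) β) / cos (β/2)`. -/
noncomputable def shiftedChebyshevV (N : ℕ) : ℝ[X] :=
  ∑ k ∈ range (N + 1), ((-4) ^ k * (N + k).choose (2 * k) : ℝ) • X ^ k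

lemma coeff_shiftedChebyshevV (N j : ℕ) :
    (shiftedChebyshevV N).coeff j = (-4) ^ j * (N + j).choose (2 * j) := by
  simp only [shiftedChebyshevV, finsetSum_coeff, coeff_smul, coeff_X_pow, smul_eq_mul, mul_ite,
    mul_one, mul_zero, sum_ite_eq, mem_range]
  split_ifs with h
  · rfl
  · rw [Nat.choose_eq_zero_of_lt (by omega), Nat.cast_zero, mul_zero]

lemma degree_shiftedChebyshevV (N : ℕ) : (shiftedChebyshevV N).degree = N := by
  apply degree_eq_of_le_of_coeff_ne_zero
  · refine (degree_le_iff_coeff_zero _ _).2 fun j hj => ?_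
    have hj : N < j := by exact_mod_cast hj
    rw [coeff_shiftedChebyshevV, Nat.choose_eq_zero_of_lt (by omega), Nat.cast_zero, mul_zero]
  · simp [coeff_shiftedChebyshevV, two_mul]

lemma coeff_shiftedChebyshevV_mul_centralBinom (N k : ℕ) :
    (shiftedChebyshevV N).coeff k * k.centralBinom = 4 ^ k * (shiftedLegendre N).coeff k := by
  have trinomial : (N + k).choose (2 * k) * k.centralBinom = N.choose k * (N + k).choose N := by
    rcases le_or_gt k N with h | h
    · have := Nat.choose_mul (n := N + k) (k := 2 * k) (s := k) (by omega)
      rw [show N + k - k = N by omega, show 2 * k - k = k by omega] at this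
      rw [Nat.centralBinom, this, mul_comm, Nat.choose_symm_add]
    · rw [Nat.choose_eq_zero_of_lt h, Nat.choose_eq_zero_of_lt (by omega), zero_mul, zero_mul]
  have sign : (-4 : ℝ) ^ k = 4 ^ k * (-1) ^ k := by rw [← mul_pow]; norm_num
  have trinomial' : ((N + k).choose (2 * k) : ℝ) * k.centralBinom =
      N.choose k * (N + k).choose N := by exact_mod_cast trinomial
  rw [coeff_shiftedChebyshevV, coeff_shiftedLegendre, sign]
  push_cast
  linear_combination 4 ^ k * (-1) ^ k * trinomial'

lemma choose_add_two_add_choose (m r : ℕ) :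
    (m + 2).choose (r + 2) + m.choose (r + 2) = 2 * (m + 1).choose (r + 2) + m.choose r := by
  have h₁ : (m + 2).choose (r + 2) = (m + 1).choose (r + 1) + (m + 1).choose (r + 2) :=
    Nat.choose_succ_succ' _ _
  have h₂ : (m + 1).choose (r + 2) = m.choose (r + 1) + m.choose (r + 2) :=
    Nat.choose_succ_succ' _ _
  have h₃ : (m + 1).choose (r + 1) = m.choose r + m.choose (r + 1) := Nat.choose_succ_succ' _ _
  omega

lemma shiftedChebyshevV_add_two (N : ℕ) :
    shiftedChebyshevV (N + 2) =
      (2 - 4 * X : ℝ[X]) * shiftedChebyshevV (N + 1) - shiftedChebyshevV N := by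
  have expand : (2 - 4 * X : ℝ[X]) * shiftedChebyshevV (N + 1) =
      (2 : ℝ) • shiftedChebyshevV (N + 1) - (4 : ℝ) • (X * shiftedChebyshevV (N + 1)) := by
    simp only [smul_eq_C_mul, map_ofNat]; ring
  rw [expand]
  ext j
  cases j with
  | zero =>
    simp only [coeff_shiftedChebyshevV, coeff_sub, coeff_smul, mul_coeff_zero, coeff_X_zero,
      smul_eq_mul, pow_zero, mul_zero, zero_mul, add_zero, Nat.choose_zero_right, Nat.cast_one]
    norm_num
  | succ j =>
    have pascal : ((N + 2 + (j + 1)).choose (2 * (j + 1)) : ℝ) + (N + (j + 1)).choose (2 * (j + 1))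
        = 2 * (N + 1 + (j + 1)).choose (2 * (j + 1)) + (N + 1 + j).choose (2 * j) := by
      have := choose_add_two_add_choose (N + 1 + j) (2 * j)
      rw [show N + 2 + (j + 1) = N + 1 + j + 2 by omega, show N + (j + 1) = N + 1 + j by omega,
        show N + 1 + (j + 1) = N + 1 + j + 1 by omega, mul_add_one]
      exact_mod_cast this
    simp only [coeff_sub, coeff_smul, coeff_X_mul, coeff_shiftedChebyshevV, smul_eq_mul]
    linear_combination (-4) ^ (j + 1) * pascal

lemma cos_odd_mul_eq_cos_mul_eval (N : ℕ) (t : ℝ) :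
    cos ((2 * N + 1) * t) = cos t * (shiftedChebyshevV N).eval (sin t ^ 2) := by
  induction N using Nat.twoStepInduction with
  | zero => simp [shiftedChebyshevV]
  | one =>
    have triple : cos ((2 * (1 : ℕ) + 1) * t) = 4 * cos t ^ 3 - 3 * cos t := by
      rw [← cos_three_mul]; norm_num
    rw [triple]
    simp only [shiftedChebyshevV, sum_range_succ, range_zero, sum_empty, eval_add, eval_smul,
      eval_X, eval_one, smul_eq_mul, pow_zero, pow_one, mul_zero, mul_one, zero_add, add_zero,
      Nat.choose_zero_right, Nat.choose_self, Nat.reduceAdd, Nat.cast_one]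
    linear_combination (4 * cos t) * sin_sq_add_cos_sq t
  | more N ih ih_succ =>
    have sum_to_product : cos ((2 * (N + 2 : ℕ) + 1) * t) + cos ((2 * N + 1) * t) =
        2 * (1 - 2 * sin t ^ 2) * cos ((2 * (N + 1 : ℕ) + 1) * t) := by
      have cos_double : cos (2 * t) = 1 - 2 * sin t ^ 2 := by rw [cos_two_mul, cos_sq']; ring
      rw [cos_add_cos, ← cos_double]
      push_cast
      ring_nf
    simp only [shiftedChebyshevV_add_two, eval_sub, eval_mul, eval_ofNat, eval_X]
    linear_combination sum_to_product - ih + 2 * (1 - 2 * sin t ^ 2) * ih_succ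

end ShiftedChebyshev

section TrigonometricIntegrals

open Polynomial Finset

lemma integral_sin_pow_even_symm (k : ℕ) :
    ∫ α in -(π / 2)..π / 2, sin α ^ (2 * k) = π * (k.centralBinom / 4 ^ k) := by
  have wallis : ∏ i ∈ range k, (2 * (i : ℝ) + 1) / (2 * i + 2) = k.centralBinom / 4 ^ k := by
    induction k with
    | zero => simp
    | succ k ih =>
      have h : ((k : ℝ) + 1) * (k + 1).centralBinom = 2 * (2 * k + 1) * k.centralBinom := by
        exact_mod_cast Nat.succ_mul_centralBinom_succ k
      rw [prod_range_succ, ih]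
      field_simp
      linear_combination (-2 * 4 ^ k : ℝ) * h
  have periodic : Function.Periodic (fun α => sin α ^ (2 * k)) π := fun α => by
    simp [sin_add_pi, pow_mul]
  have shift := periodic.intervalIntegral_add_eq (-(π / 2)) 0
  rw [zero_add, show -(π / 2) + π = π / 2 by ring] at shift
  rw [shift, integral_sin_pow_even, wallis]

lemma coeff_C_mul_X_add_C_pow {R : Type*} [CommSemiring R] (a b : R) (n k : ℕ) :
    ((C a * X + C b) ^ n).coeff k = n.choose k * a ^ k * b ^ (n - k) := by
  have comp_eq : (C a * X + C b) ^ n = ((X + C b) ^ n).comp (C a * X) := by simp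
  rw [comp_eq, comp_C_mul_X_coeff, coeff_X_add_C_pow]
  ring

lemma sq_norm_mul_circleMap_sub (a b φ : ℝ) :
    ‖(a : ℂ) * circleMap 0 1 φ - b‖ ^ 2 = a ^ 2 + b ^ 2 - 2 * a * b * cos φ := by
  rw [Complex.sq_norm, Complex.normSq_apply, circleMap_zero, Complex.exp_mul_I]
  simp only [← Complex.ofReal_cos, ← Complex.ofReal_sin, Complex.ofReal_one, Complex.mul_re,
    Complex.mul_im, Complex.add_re, Complex.add_im, Complex.sub_re, Complex.sub_im,
    Complex.ofReal_re, Complex.ofReal_im, Complex.I_re, Complex.I_im, one_mul, mul_one, zero_mul,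
    mul_zero, add_zero, zero_add, sub_zero, sub_self]
  linear_combination a ^ 2 * sin_sq_add_cos_sq φ

lemma integral_sq_add_sq_sub_cos_pow (a b : ℝ) (n : ℕ) :
    ∫ φ in (0 : ℝ)..2 * π, (a ^ 2 + b ^ 2 - 2 * a * b * cos φ) ^ n =
      2 * π * ∑ k ∈ range (n + 1), (n.choose k : ℝ) ^ 2 * (a ^ 2) ^ k * (b ^ 2) ^ (n - k) := by
  let p : ℂ[X] := (C (a : ℂ) * X + C (-b : ℂ)) ^ n
  have norm_eval (φ : ℝ) :
      ‖p.eval (circleMap 0 1 φ)‖ ^ 2 = (a ^ 2 + b ^ 2 - 2 * a * b * cos φ) ^ n := by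
    rw [← sq_norm_mul_circleMap_sub, ← pow_mul, mul_comm 2 n, pow_mul, ← norm_pow]
    simp [p, sub_eq_add_neg]
  have norm_coeff (k : ℕ) :
      ‖p.coeff k‖ ^ 2 = (n.choose k : ℝ) ^ 2 * (a ^ 2) ^ k * (b ^ 2) ^ (n - k) := by
    rw [coeff_C_mul_X_add_C_pow]
    simp [mul_pow, pow_right_comm _ k 2, pow_right_comm _ (n - k) 2]
  have natDegree_le : p.natDegree ≤ n := by unfold p; compute_degree
  have support_subset : p.support ⊆ range (n + 1) :=
    supp_subset_range (Nat.lt_succ_of_le natDegree_le)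
  have parseval := p.sum_sq_norm_coeff_eq_circleAverage
  rw [circleAverage_def, sum_subset support_subset fun k _ hk => by simp [notMem_support_iff.1 hk]]
    at parseval
  simp only [norm_coeff, norm_eval, smul_eq_mul] at parseval
  rw [parseval, mul_inv_cancel_left₀ two_pi_pos.ne']

end TrigonometricIntegrals

section Determinacy

open Polynomial Set

lemma integrable_of_continuous_of_ae_mem_isCompact {X E : Type*} [TopologicalSpace X]
    [MeasurableSpace X] [OpensMeasurableSpace X] [SecondCountableTopology X]
    [TopologicalSpace.PseudoMetrizableSpace X] [NormedAddCommGroup E]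
    {μ : Measure X} [IsFiniteMeasure μ] {K : Set X} (hK : IsCompact K) (hμ : ∀ᵐ x ∂μ, x ∈ K)
    {f : X → E} (hf : Continuous f) : Integrable f μ := by
  obtain ⟨C, hC⟩ := hK.exists_bound_of_continuousOn hf.continuousOn
  exact .of_bound hf.aestronglyMeasurable C (hμ.mono hC)

variable {a b : ℝ} {μ ν : Measure ℝ} [IsFiniteMeasure μ] [IsFiniteMeasure ν]

lemma abs_integral_sub_integral_le (hμ : ∀ᵐ x ∂μ, x ∈ Icc a b) {f g : ℝ → ℝ}
    (hf : Continuous f) (hg : Continuous g) {ε : ℝ} (h : ∀ x ∈ Icc a b, |f x - g x| < ε) :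
    |∫ x, f x ∂μ - ∫ x, g x ∂μ| ≤ ε * μ.real univ := by
  rw [← MeasureTheory.integral_sub
    (integrable_of_continuous_of_ae_mem_isCompact isCompact_Icc hμ hf)
    (integrable_of_continuous_of_ae_mem_isCompact isCompact_Icc hμ hg), ← Real.norm_eq_abs]
  exact norm_integral_le_of_norm_le_const (hμ.mono fun x hx => (h x hx).le)

lemma ext_of_forall_integral_polynomial_eq (hμ : ∀ᵐ x ∂μ, x ∈ Icc a b)
    (hν : ∀ᵐ x ∂ν, x ∈ Icc a b) (h : ∀ p : ℝ[X], ∫ x, p.eval x ∂μ = ∫ x, p.eval x ∂ν) :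
    μ = ν := by
  refine ext_of_forall_integral_eq_of_IsFiniteMeasure fun f => ?_
  refine eq_of_forall_dist_le fun ε hε => ?_
  set M := μ.real univ + ν.real univ + 1
  have M_pos : 0 < M := by positivity
  obtain ⟨p, hp⟩ := exists_polynomial_near_of_continuousOn a b f f.continuous.continuousOn
    (ε / M) (by positivity)
  have hpμ := abs_integral_sub_integral_le hμ p.continuous f.continuous hp
  have hpν := abs_integral_sub_integral_le hν p.continuous f.continuous hp
  rw [h p, abs_sub_comm] at hpμ
  calc dist (∫ x, f x ∂μ) (∫ x, f x ∂ν)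
      ≤ ε / M * μ.real univ + ε / M * ν.real univ :=
        (abs_sub_le _ (∫ x, p.eval x ∂ν) _).trans (add_le_add hpμ hpν)
    _ ≤ ε / M * M := by rw [← mul_add]; gcongr; exact le_add_of_nonneg_right zero_le_one
    _ = ε := div_mul_cancel₀ ε M_pos.ne'

lemma ext_of_forall_integral_polynomialSequence_eq (S : Polynomial.Sequence ℝ)
    (hμ : ∀ᵐ x ∂μ, x ∈ Icc a b) (hν : ∀ᵐ x ∂ν, x ∈ Icc a b)
    (h : ∀ n, ∫ x, (S n).eval x ∂μ = ∫ x, (S n).eval x ∂ν) : μ = ν := by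
  refine ext_of_forall_integral_polynomial_eq hμ hν fun p => ?_
  have hp : p ∈ Submodule.span ℝ (range S) := by
    rw [S.span fun n => (leadingCoeff_ne_zero.2 (S.ne_zero n)).isUnit]; trivial
  induction hp using Submodule.span_induction with
  | mem p hp => obtain ⟨n, rfl⟩ := hp; exact h n
  | zero => simp
  | add p q _ _ hp hq =>
    simp only [eval_add]
    rw [MeasureTheory.integral_add, MeasureTheory.integral_add, hp, hq] <;>
      exact integrable_of_continuous_of_ae_mem_isCompact isCompact_Icc ‹_› (Polynomial.continuous _)
  | smul c p _ hp => simp only [eval_smul, MeasureTheory.integral_smul, hp]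

end Determinacy

section SymmetricIntegrals

variable {E : Type*} [NormedAddCommGroup E] [NormedSpace ℝ E] {f : ℝ → E}

lemma integral_symm_of_odd (hf : Function.Odd f) (a : ℝ) : ∫ x in -a..a, f x = 0 := by
  have h := integral_comp_neg (a := -a) (b := a) f
  simp only [hf _, neg_neg, intervalIntegral.integral_neg] at h
  have two_smul_eq_zero : (2 : ℝ) • ∫ x in -a..a, f x = 0 := by
    rw [two_smul, ← neg_eq_iff_add_eq_zero, h]
  exact (smul_eq_zero.1 two_smul_eq_zero).resolve_left two_ne_zero

lemma integral_symm_of_even (hf : Function.Even f) (a : ℝ) :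
    ∫ x in -a..a, f x = (2 : ℝ) • ∫ x in 0..a, f x := by
  have reflect : ∫ x in -a..0, f x = ∫ x in 0..a, f x := by
    simpa only [hf _, neg_zero, neg_neg] using integral_comp_neg (a := -a) (b := 0) f
  by_cases hint : IntervalIntegrable f volume 0 a
  · have hint' : IntervalIntegrable f volume (-a) 0 := by
      simpa only [hf _, neg_zero] using ((IntervalIntegrable.iff_comp_neg (by simp)).1 hint).symm
    rw [← integral_add_adjacent_intervals hint' hint, reflect, two_smul]
  · have hint' : ¬IntervalIntegrable f volume (-a) a := fun h => hint (h.mono_set (by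
      rw [Set.uIcc_subset_uIcc_iff_mem]
      exact ⟨by simp [Set.mem_uIcc, le_total], Set.right_mem_uIcc⟩))
    rw [integral_undef hint, integral_undef hint', smul_zero]

end SymmetricIntegrals

section MehlerKernel

open Set

/-- The kernel `K_ν` characterised by `K_ν (sin² t) = cos ((2ν + 1) t) / cos t` for `|t| < π / 2`.
It isolates the dependence of the Mehler–Dirichlet integral on the degree. -/
noncomputable def mehlerKernel (ν : ℂ) (z : ℝ) : ℂ :=
  Complex.cos ((2 * ν + 1) * (arcsin √z : ℝ)) / ((√(1 - z) : ℝ) : ℂ)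

lemma measurable_mehlerKernel (ν : ℂ) : Measurable (mehlerKernel ν) := by
  have continuous_num : Continuous fun z => Complex.cos ((2 * ν + 1) * (arcsin √z : ℝ)) := by
    have := continuous_arcsin
    fun_prop
  have continuous_denom : Continuous fun z => ((√(1 - z) : ℝ) : ℂ) := by fun_prop
  exact continuous_num.measurable.div continuous_denom.measurable

lemma mehlerKernel_sin_sq (ν : ℂ) {t : ℝ} (ht : |t| < π / 2) :
    mehlerKernel ν (sin t ^ 2) = Complex.cos ((2 * ν + 1) * t) / ((cos t : ℝ) : ℂ) := by
  have cos_abs_pos : 0 < cos |t| := cos_pos_of_mem_Ioo ⟨by linarith [abs_nonneg t], ht⟩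
  have abs_sin : |sin t| = sin |t| :=
    abs_sin_eq_sin_abs_of_abs_le_pi (by linarith [pi_pos])
  have arcsin_eq : arcsin |sin t| = |t| := by
    rw [abs_sin, arcsin_sin (by linarith [abs_nonneg t]) ht.le]
  rw [mehlerKernel, sqrt_sq_eq_abs, arcsin_eq, ← cos_sq', ← cos_abs, sqrt_sq cos_abs_pos.le,
    cos_abs]
  rcases abs_choice t with h | h <;> rw [h]
  rw [Complex.ofReal_neg, mul_neg, Complex.cos_neg]

lemma mehlerKernel_natCast (N : ℕ) {z : ℝ} (hz : z ∈ Ico 0 1) :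
    mehlerKernel N z = (shiftedChebyshevV N).eval z := by
  obtain ⟨t, ht, rfl⟩ : ∃ t, |t| < π / 2 ∧ sin t ^ 2 = z := by
    have sqrt_lt : √z < 1 := by simpa only [sqrt_one] using sqrt_lt_sqrt hz.1 hz.2
    refine ⟨arcsin √z, ?_, ?_⟩
    · rw [abs_of_nonneg (arcsin_nonneg.2 (sqrt_nonneg z))]
      exact arcsin_lt_pi_div_two.2 sqrt_lt
    · rw [sin_arcsin (by linarith [sqrt_nonneg z]) sqrt_lt.le, sq_sqrt hz.1]
  have cos_ne_zero : ((cos t : ℝ) : ℂ) ≠ 0 :=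
    Complex.ofReal_ne_zero.2 (cos_pos_of_mem_Ioo (abs_lt.1 ht)).ne'
  rw [mehlerKernel_sin_sq _ ht, div_eq_iff cos_ne_zero, ← Complex.ofReal_mul,
    mul_comm (Polynomial.eval _ _), ← cos_odd_mul_eq_cos_mul_eval]
  push_cast
  rfl

/-- The angle in `[-γ, γ]` with sine `sin γ * sin α`; half of the Mehler–Dirichlet integration
variable `β`, parametrised by `α`. -/
noncomputable def mehlerAngle (γ α : ℝ) : ℝ := arcsin (sin γ * sin α)

@[fun_prop]
lemma continuous_mehlerAngle (γ : ℝ) : Continuous (mehlerAngle γ) :=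
  continuous_arcsin.comp (by fun_prop)

lemma mehlerAngle_neg (γ α : ℝ) : mehlerAngle γ (-α) = -mehlerAngle γ α := by
  simp [mehlerAngle, arcsin_neg]

lemma sin_mehlerAngle (γ α : ℝ) : sin (mehlerAngle γ α) = sin γ * sin α := by
  have h : |sin γ * sin α| ≤ 1 := by
    rw [abs_mul]
    exact mul_le_one₀ (abs_sin_le_one γ) (abs_nonneg _) (abs_sin_le_one α)
  exact sin_arcsin (abs_le.1 h).1 (abs_le.1 h).2

lemma abs_mehlerAngle_le {γ : ℝ} (hγ : γ ∈ Ico 0 (π / 2)) (α : ℝ) : |mehlerAngle γ α| ≤ γ := by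
  have sin_nonneg : 0 ≤ sin γ :=
    sin_nonneg_of_nonneg_of_le_pi hγ.1 (by linarith [hγ.2, pi_pos])
  have le (α : ℝ) : mehlerAngle γ α ≤ γ :=
    (arcsin_le_iff_le_sin' ⟨by linarith [hγ.1, hγ.2], hγ.2⟩).2
      (mul_le_of_le_one_right sin_nonneg (sin_le_one α))
  exact abs_le'.2 ⟨le α, mehlerAngle_neg γ α ▸ le (-α)⟩

lemma abs_mehlerAngle_lt {γ α : ℝ} (hγ : γ ∈ Ioc 0 (π / 2)) (hα : |α| < π / 2) :
    |mehlerAngle γ α| < γ := by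
  have sin_pos : 0 < sin γ := sin_pos_of_pos_of_lt_pi hγ.1 (by linarith [hγ.1, hγ.2])
  have lt {α : ℝ} (hα : |α| < π / 2) : mehlerAngle γ α < γ := by
    refine (arcsin_lt_iff_lt_sin' ⟨by linarith [hγ.1, hγ.2], hγ.2⟩).2
      (mul_lt_of_lt_one_right sin_pos ?_)
    rw [← sin_pi_div_two]
    exact sin_lt_sin_of_lt_of_le_pi_div_two (abs_lt.1 hα).1.le le_rfl (abs_lt.1 hα).2
  exact max_lt (lt hα) (mehlerAngle_neg γ α ▸ lt (by rwa [abs_neg]))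

lemma cos_mehlerAngle_pos {γ : ℝ} (hγ : γ ∈ Ico 0 (π / 2)) (α : ℝ) : 0 < cos (mehlerAngle γ α) :=
  cos_pos_of_mem_Ioo (abs_lt.1 ((abs_mehlerAngle_le hγ α).trans_lt hγ.2))

lemma hasDerivAt_mehlerAngle {γ α : ℝ} (h : |mehlerAngle γ α| < π / 2) :
    HasDerivAt (mehlerAngle γ) (sin γ * cos α / cos (mehlerAngle γ α)) α := by
  have angle_mem := abs_lt.1 h
  have hasDerivAt_arcsin := hasDerivAt_arcsin (x := sin γ * sin α)
    (fun eq_neg_one => by simp [mehlerAngle, eq_neg_one] at angle_mem)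
    (fun eq_one => by simp [mehlerAngle, eq_one] at angle_mem)
  convert! hasDerivAt_arcsin.comp α ((hasDerivAt_sin α).const_mul (sin γ)) using 1
  rw [mehlerAngle, cos_arcsin]
  ring

end MehlerKernel

section MehlerMean

open Set ProbabilityTheory

lemma integral_cond_Ioo {E : Type*} [NormedAddCommGroup E] [NormedSpace ℝ E] {a b : ℝ} (hab : a ≤ b)
    (f : ℝ → E) : ∫ x, f x ∂volume[|Ioo a b] = (b - a)⁻¹ • ∫ x in a..b, f x := by
  rw [ProbabilityTheory.cond, ← setAverage_eq', setAverage_eq, integral_of_le hab,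
    integral_Ioc_eq_integral_Ioo, volume_real_Ioo_of_le hab]

/-- The uniform probability measure on the half circle `(-π/2, π/2)`. -/
noncomputable abbrev halfCircleMeasure : Measure ℝ := volume[|Ioo (-(π / 2)) (π / 2)]

lemma integral_halfCircleMeasure {E : Type*} [NormedAddCommGroup E] [NormedSpace ℝ E] (f : ℝ → E) :
    ∫ α, f α ∂halfCircleMeasure = π⁻¹ • ∫ α in -(π / 2)..π / 2, f α := by
  rw [integral_cond_Ioo (by linarith [pi_pos]), sub_neg_eq_add, add_halves]

lemma ae_halfCircleMeasure_abs_lt : ∀ᵐ α ∂halfCircleMeasure, |α| < π / 2 :=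
  (ae_cond_mem measurableSet_Ioo).mono fun _ => abs_lt.2

lemma mehlerDirichlet_integrand_comp {γ α : ℝ} (ν : ℂ) (hγ : γ ∈ Ioc 0 (π / 2))
    (hα : |α| < π / 2) :
    (2 * (sin γ * cos α / cos (mehlerAngle γ α))) •
        (Complex.cos ((2 * ν + 1) * (2 * mehlerAngle γ α : ℝ) / 2) /
          ((√(2 * (cos (2 * mehlerAngle γ α) - cos (2 * γ))) : ℝ) : ℂ)) =
      mehlerKernel ν (sin γ ^ 2 * sin α ^ 2) := by
  have angle_lt : |mehlerAngle γ α| < π / 2 := (abs_mehlerAngle_lt hγ hα).trans_le hγ.2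
  have sin_pos : 0 < sin γ := sin_pos_of_pos_of_lt_pi hγ.1 (by linarith [hγ.1, hγ.2])
  have cos_pos : 0 < cos α := cos_pos_of_mem_Ioo (abs_lt.1 hα)
  have cos_angle_pos := cos_pos_of_mem_Ioo (abs_lt.1 angle_lt)
  have sqrt_eq : √(2 * (cos (2 * mehlerAngle γ α) - cos (2 * γ))) = 2 * (sin γ * cos α) := by
    rw [sqrt_eq_iff_mul_self_eq_of_pos (by positivity), cos_two_mul_eq_one_sub,
      cos_two_mul_eq_one_sub, sin_mehlerAngle]
    linear_combination (4 * sin γ ^ 2) * sin_sq_add_cos_sq α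
  rw [sqrt_eq, ← mul_pow, ← sin_mehlerAngle, mehlerKernel_sin_sq ν angle_lt, Complex.real_smul]
  have : ((cos (mehlerAngle γ α) : ℝ) : ℂ) ≠ 0 := Complex.ofReal_ne_zero.2 cos_angle_pos.ne'
  have : ((cos α : ℝ) : ℂ) ≠ 0 := Complex.ofReal_ne_zero.2 cos_pos.ne'
  have : ((sin γ : ℝ) : ℂ) ≠ 0 := Complex.ofReal_ne_zero.2 sin_pos.ne'
  simp only [Complex.ofReal_mul, Complex.ofReal_div, Complex.ofReal_ofNat]
  field_simp

lemma mehlerDirichlet_integral_eq (ν : ℂ) {γ : ℝ} (hγ : γ ∈ Ioc 0 (π / 2)) :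
    ∫ β in 0..2 * γ, Complex.cos ((2 * ν + 1) * (β : ℂ) / 2) /
        ((√(2 * (cos β - cos (2 * γ))) : ℝ) : ℂ) =
      ∫ α in 0..π / 2, mehlerKernel ν (sin γ ^ 2 * sin α ^ 2) := by
  have abs_lt_of_mem {α : ℝ} (hα : α ∈ Ioo 0 (π / 2)) : |α| < π / 2 := by
    rw [abs_of_pos hα.1]; exact hα.2
  have angle_zero : 2 * mehlerAngle γ 0 = 0 := by simp [mehlerAngle]
  have angle_pi_div_two : 2 * mehlerAngle γ (π / 2) = 2 * γ := by
    rw [mehlerAngle, sin_pi_div_two, mul_one, arcsin_sin (by linarith [hγ.1, hγ.2]) hγ.2]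
  have change_of_variables := integral_deriv_smul_comp_of_deriv_nonneg (a := 0) (b := π / 2)
    (f := fun α => 2 * mehlerAngle γ α)
    (f' := fun α => 2 * (sin γ * cos α / cos (mehlerAngle γ α)))
    (g := fun β => Complex.cos ((2 * ν + 1) * (β : ℂ) / 2) /
      ((√(2 * (cos β - cos (2 * γ))) : ℝ) : ℂ))
    ((continuous_mehlerAngle γ).const_mul 2).continuousOn
  rw [min_eq_left (by positivity), max_eq_right (by positivity), angle_zero, angle_pi_div_two]
    at change_of_variables
  rw [← change_of_variables]
  · exact integral_congr_Ioo_of_le (by positivity) fun α hα =>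
      mehlerDirichlet_integrand_comp ν hγ (abs_lt_of_mem hα)
  · intro α hα
    exact (hasDerivAt_mehlerAngle
      ((abs_mehlerAngle_lt hγ (abs_lt_of_mem hα)).trans_le hγ.2)).const_mul 2
  · intro α hα
    have := (cos_pos_of_mem_Ioo (abs_lt.1
      ((abs_mehlerAngle_lt hγ (abs_lt_of_mem hα)).trans_le hγ.2))).le
    have := cos_nonneg_of_mem_Icc ⟨by linarith [hα.1, pi_pos], hα.2.le⟩
    have := sin_nonneg_of_nonneg_of_le_pi hγ.1.le (by linarith [hγ.1, hγ.2])
    positivity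

theorem legendreP_cos_two_mul (ν : ℂ) {γ : ℝ} (hγ : γ ∈ Icc 0 (π / 2)) :
    legendreP ν (cos (2 * γ)) =
      ∫ α, mehlerKernel ν (sin γ ^ 2 * sin α ^ 2) ∂halfCircleMeasure := by
  rw [integral_halfCircleMeasure, integral_symm_of_even (by intro α; simp)]
  rcases hγ.1.eq_or_lt with rfl | hpos
  · simp [legendreP, mehlerKernel, mul_div_cancel₀, pi_ne_zero]
  · have cos_ne_one : cos (2 * γ) ≠ 1 := by
      rw [cos_two_mul_eq_one_sub]
      have := sin_pos_of_pos_of_lt_pi hpos (by linarith [hγ.2])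
      have : 0 < sin γ ^ 2 := by positivity
      linarith
    rw [legendreP, if_neg cos_ne_one, arccos_cos (by linarith) (by linarith [hγ.2]),
      mehlerDirichlet_integral_eq ν ⟨hpos, hγ.2⟩, smul_smul, Complex.real_smul]
    congr 2
    ring

lemma legendreP_one_sub_two_mul (ν : ℂ) {z : ℝ} (hz : z ∈ Icc 0 1) :
    legendreP ν (1 - 2 * z) = ∫ α, mehlerKernel ν (z * sin α ^ 2) ∂halfCircleMeasure := by
  have sin_sq : sin (arcsin √z) ^ 2 = z := by
    rw [sin_arcsin (by linarith [sqrt_nonneg z]) (sqrt_le_one.2 hz.2), sq_sqrt hz.1]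
  have h := legendreP_cos_two_mul ν (γ := arcsin √z)
    ⟨arcsin_nonneg.2 (sqrt_nonneg z), arcsin_le_pi_div_two _⟩
  rwa [cos_two_mul_eq_one_sub, sin_sq] at h

end MehlerMean

section MehlerCosSin

open Set

/-- The pull-back `cos ((2ν + 1) A) / cos A` of `mehlerKernel ν` along `α ↦ sin² A`, where `A` is
the Mehler angle of `α`. -/
noncomputable def mehlerCos (ν : ℂ) (γ α : ℝ) : ℂ :=
  Complex.cos ((2 * ν + 1) * mehlerAngle γ α) / ((cos (mehlerAngle γ α) : ℝ) : ℂ)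

/-- The sine companion of `mehlerCos`, needed for the addition formula of the cosine. -/
noncomputable def mehlerSin (ν : ℂ) (γ α : ℝ) : ℂ :=
  Complex.sin ((2 * ν + 1) * mehlerAngle γ α) / ((cos (mehlerAngle γ α) : ℝ) : ℂ)

lemma continuous_mehlerCos (ν : ℂ) {γ : ℝ} (hγ : γ ∈ Ico 0 (π / 2)) :
    Continuous (mehlerCos ν γ) :=
  Continuous.div (by fun_prop) (by fun_prop) fun α =>
    Complex.ofReal_ne_zero.2 (cos_mehlerAngle_pos hγ α).ne'

lemma continuous_mehlerSin (ν : ℂ) {γ : ℝ} (hγ : γ ∈ Ico 0 (π / 2)) :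
    Continuous (mehlerSin ν γ) :=
  Continuous.div (by fun_prop) (by fun_prop) fun α =>
    Complex.ofReal_ne_zero.2 (cos_mehlerAngle_pos hγ α).ne'

lemma integral_mehlerCos (ν : ℂ) {γ : ℝ} (hγ : γ ∈ Ico 0 (π / 2)) :
    ∫ α, mehlerCos ν γ α ∂halfCircleMeasure = legendreP ν (cos (2 * γ)) := by
  simp only [legendreP_cos_two_mul ν (Ico_subset_Icc_self hγ), ← mul_pow, ← sin_mehlerAngle,
    mehlerKernel_sin_sq ν ((abs_mehlerAngle_le hγ _).trans_lt hγ.2), mehlerCos]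

lemma integral_mehlerSin (ν : ℂ) (γ : ℝ) : ∫ α, mehlerSin ν γ α ∂halfCircleMeasure = 0 := by
  have odd : Function.Odd (mehlerSin ν γ) := fun α => by
    simp only [mehlerSin, mehlerAngle_neg, Complex.ofReal_neg, mul_neg, Complex.sin_neg, cos_neg,
      neg_div]
  rw [integral_halfCircleMeasure, integral_symm_of_odd odd, smul_zero]

end MehlerCosSin

section IntegerDegree

open Finset (range)
open Set Polynomial ProbabilityTheory

lemma integrable_cond_Ioo_of_continuous {E : Type*} [NormedAddCommGroup E] {f : ℝ → E}
    (hf : Continuous f) (a b : ℝ) : Integrable f volume[|Ioo a b] :=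
  integrable_of_continuous_of_ae_mem_isCompact isCompact_Icc
    ((ae_cond_mem measurableSet_Ioo).mono fun _ hx => Ioo_subset_Icc_self hx) hf

lemma integral_shiftedChebyshevV_mul_sin_sq (N : ℕ) (z : ℝ) :
    ∫ α, (shiftedChebyshevV N).eval (z * sin α ^ 2) ∂halfCircleMeasure =
      aeval z (shiftedLegendre N) := by
  simp only [eval_eq_sum_range' (Nat.lt_succ_of_le
    (natDegree_eq_of_degree_eq_some (degree_shiftedChebyshevV N)).le)]
  rw [aeval_eq_sum_range, natDegree_shiftedLegendre, MeasureTheory.integral_finsetSum]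
  · refine Finset.sum_congr rfl fun k _ => ?_
    have coeff_eq := coeff_shiftedChebyshevV_mul_centralBinom N k
    simp only [mul_pow, ← pow_mul]
    rw [MeasureTheory.integral_const_mul, MeasureTheory.integral_const_mul,
      integral_halfCircleMeasure, integral_sin_pow_even_symm, smul_eq_mul,
      inv_mul_cancel_left₀ pi_ne_zero, zsmul_eq_mul]
    field_simp
    linear_combination z ^ k * coeff_eq
  · exact fun k _ => integrable_cond_Ioo_of_continuous (by fun_prop) _ _

lemma legendreP_natCast (N : ℕ) {z : ℝ} (hz : z ∈ Ico 0 1) :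
    legendreP N (1 - 2 * z) = (aeval z (shiftedLegendre N) : ℝ) := by
  have kernel_eq (α : ℝ) :
      mehlerKernel N (z * sin α ^ 2) = (shiftedChebyshevV N).eval (z * sin α ^ 2) :=
    mehlerKernel_natCast N ⟨mul_nonneg hz.1 (sq_nonneg _),
      mul_lt_one_of_nonneg_of_lt_one_left hz.1 hz.2 (sin_sq_le_one α)⟩
  simp only [legendreP_one_sub_two_mul _ (Ico_subset_Icc_self hz), kernel_eq]
  rw [integral_complex_ofReal, integral_shiftedChebyshevV_mul_sin_sq]

/-- `sin² (δ / 2)`, where `δ` is the third side of the spherical triangle whose sides `2γ₁` and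
`2γ₂` enclose the angle `φ`. -/
noncomputable def sinSqHalfThirdSide (γ₁ γ₂ φ : ℝ) : ℝ :=
  (sin γ₁ * cos γ₂) ^ 2 + (sin γ₂ * cos γ₁) ^ 2 -
    2 * (sin γ₁ * cos γ₂) * (sin γ₂ * cos γ₁) * cos φ

lemma one_sub_two_mul_sinSqHalfThirdSide (γ₁ γ₂ φ : ℝ) :
    1 - 2 * sinSqHalfThirdSide γ₁ γ₂ φ =
      cos (2 * γ₁) * cos (2 * γ₂) + sin (2 * γ₁) * sin (2 * γ₂) * cos φ := by
  rw [sinSqHalfThirdSide, cos_two_mul_eq_one_sub, cos_two_mul_eq_one_sub, sin_two_mul, sin_two_mul,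
    mul_pow, mul_pow, cos_sq' γ₁, cos_sq' γ₂]
  ring

lemma sinSqHalfThirdSide_nonneg (γ₁ γ₂ φ : ℝ) : 0 ≤ sinSqHalfThirdSide γ₁ γ₂ φ := by
  rw [sinSqHalfThirdSide, ← sq_norm_mul_circleMap_sub]
  positivity

lemma one_sub_sinSqHalfThirdSide (γ₁ γ₂ φ : ℝ) :
    1 - sinSqHalfThirdSide γ₁ γ₂ φ = sinSqHalfThirdSide γ₁ (π / 2 - γ₂) (π - φ) := by
  simp only [sinSqHalfThirdSide, cos_pi_div_two_sub, sin_pi_div_two_sub, cos_pi_sub, mul_pow,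
    cos_sq' γ₁, cos_sq' γ₂]
  ring

lemma sinSqHalfThirdSide_mem_Icc (γ₁ γ₂ φ : ℝ) : sinSqHalfThirdSide γ₁ γ₂ φ ∈ Icc 0 1 :=
  ⟨sinSqHalfThirdSide_nonneg γ₁ γ₂ φ,
    sub_nonneg.1 (one_sub_sinSqHalfThirdSide γ₁ γ₂ φ ▸ sinSqHalfThirdSide_nonneg _ _ _)⟩

@[fun_prop]
lemma continuous_sinSqHalfThirdSide (γ₁ γ₂ : ℝ) : Continuous (sinSqHalfThirdSide γ₁ γ₂) := by
  unfold sinSqHalfThirdSide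
  fun_prop

/-- The uniform probability measure on the circle, as a measure on the angles in `(0, 2π)`. -/
noncomputable abbrev circleMeasure : Measure ℝ := volume[|Ioo 0 (2 * π)]

lemma integral_circleMeasure {E : Type*} [NormedAddCommGroup E] [NormedSpace ℝ E] (f : ℝ → E) :
    ∫ φ, f φ ∂circleMeasure = (2 * π)⁻¹ • ∫ φ in 0..2 * π, f φ := by
  rw [integral_cond_Ioo two_pi_pos.le, sub_zero]

lemma integral_sinSqHalfThirdSide_pow (γ₁ γ₂ : ℝ) (n : ℕ) :
    ∫ φ, sinSqHalfThirdSide γ₁ γ₂ φ ^ n ∂circleMeasure =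
      ∑ k ∈ range (n + 1), (n.choose k : ℝ) ^ 2 * (sin γ₁ ^ 2 * (1 - sin γ₂ ^ 2)) ^ k *
        (sin γ₂ ^ 2 * (1 - sin γ₁ ^ 2)) ^ (n - k) := by
  simp only [integral_circleMeasure, sinSqHalfThirdSide]
  rw [integral_sq_add_sq_sub_cos_pow, smul_eq_mul, inv_mul_cancel_left₀ two_pi_pos.ne']
  simp only [mul_pow _ (cos _), cos_sq']

theorem integral_aeval_shiftedLegendre_sinSqHalfThirdSide (γ₁ γ₂ : ℝ) (N : ℕ) :
    ∫ φ, aeval (sinSqHalfThirdSide γ₁ γ₂ φ) (shiftedLegendre N) ∂circleMeasure =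
      aeval (sin γ₁ ^ 2) (shiftedLegendre N) *
        aeval (sin γ₂ ^ 2) (shiftedLegendre N) := by
  simp only [aeval_eq_sum_range, natDegree_shiftedLegendre, zsmul_eq_mul]
  rw [MeasureTheory.integral_finsetSum]
  · simp only [MeasureTheory.integral_const_mul, integral_sinSqHalfThirdSide_pow,
      sum_coeff_shiftedLegendre_mul_bernstein, aeval_eq_sum_range, natDegree_shiftedLegendre,
      zsmul_eq_mul]
  · exact fun k _ => integrable_cond_Ioo_of_continuous (by fun_prop) _ _

end IntegerDegree

section WithDensityMap

variable {X E : Type*} [MeasurableSpace X] [NormedAddCommGroup E] [NormedSpace ℝ E]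
  {μ : Measure X} {ρ w : X → ℝ} {g : ℝ → E}

lemma integrable_map_withDensity_ofReal (hρ : Measurable ρ)
    (hρ_nonneg : 0 ≤ᵐ[μ] ρ) (hw : Measurable w) (hg : StronglyMeasurable g) :
    Integrable g ((μ.withDensity fun x => ENNReal.ofReal (ρ x)).map w) ↔
      Integrable (fun x => ρ x • g (w x)) μ := by
  rw [integrable_map_measure hg.aestronglyMeasurable hw.aemeasurable,
    integrable_withDensity_iff_integrable_smul' hρ.ennreal_ofReal
      (ae_of_all _ fun _ => ENNReal.ofReal_lt_top)]
  refine integrable_congr (hρ_nonneg.mono fun x hx => ?_)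
  simp only [ENNReal.toReal_ofReal hx, Function.comp_apply]

lemma integral_map_withDensity_ofReal (hρ : Measurable ρ)
    (hρ_nonneg : 0 ≤ᵐ[μ] ρ) (hw : Measurable w) (hg : StronglyMeasurable g) :
    ∫ z, g z ∂(μ.withDensity fun x => ENNReal.ofReal (ρ x)).map w = ∫ x, ρ x • g (w x) ∂μ := by
  rw [integral_map hw.aemeasurable hg.aestronglyMeasurable,
    integral_withDensity_eq_integral_toReal_smul hρ.ennreal_ofReal
      (ae_of_all _ fun _ => ENNReal.ofReal_lt_top)]
  refine integral_congr_ae (hρ_nonneg.mono fun x hx => ?_)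
  simp only [ENNReal.toReal_ofReal hx]

end WithDensityMap

section CouplingLaws

open Set ProbabilityTheory

variable {γ₁ γ₂ : ℝ}

lemma integrable_prod_cond_Ioo_of_continuous {E : Type*} [NormedAddCommGroup E] {f : ℝ × ℝ → E}
    (hf : Continuous f) (a b c d : ℝ) :
    Integrable f ((volume[|Ioo a b]).prod volume[|Ioo c d]) :=
  integrable_of_continuous_of_ae_mem_isCompact (isCompact_Icc.prod isCompact_Icc)
    (((Measure.quasiMeasurePreserving_fst.ae (ae_cond_mem measurableSet_Ioo)).and
      (Measure.quasiMeasurePreserving_snd.ae (ae_cond_mem measurableSet_Ioo))).mono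
        fun _ hp => ⟨Ioo_subset_Icc_self hp.1, Ioo_subset_Icc_self hp.2⟩) hf

/-- The law for which the circle average of `P_ν (cos δ)` is the mean of `mehlerKernel ν`, where
`δ` is the third side of a spherical triangle with sides `2γ₁` and `2γ₂` and uniform angle. -/
noncomputable def thirdSideLaw (γ₁ γ₂ : ℝ) : Measure ℝ :=
  (circleMeasure.prod halfCircleMeasure).map fun p =>
    sinSqHalfThirdSide γ₁ γ₂ p.1 * sin p.2 ^ 2

instance : IsFiniteMeasure (thirdSideLaw γ₁ γ₂) := by
  unfold thirdSideLaw
  infer_instance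

lemma measurable_thirdSideLaw_map :
    Measurable fun p : ℝ × ℝ => sinSqHalfThirdSide γ₁ γ₂ p.1 * sin p.2 ^ 2 :=
  Continuous.measurable (by fun_prop)

lemma ae_thirdSideLaw_mem_Icc : ∀ᵐ z ∂thirdSideLaw γ₁ γ₂, z ∈ Icc 0 1 := by
  refine (ae_map_iff (p := (· ∈ Icc 0 1)) measurable_thirdSideLaw_map.aemeasurable
    measurableSet_Icc).2 (ae_of_all _ fun p => ?_)
  have h := sinSqHalfThirdSide_mem_Icc γ₁ γ₂ p.1
  exact ⟨mul_nonneg h.1 (sq_nonneg _), mul_le_one₀ h.2 (sq_nonneg _) (sin_sq_le_one _)⟩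

lemma integral_thirdSideLaw {E : Type*} [NormedAddCommGroup E] [NormedSpace ℝ E] {g : ℝ → E}
    (hg : StronglyMeasurable g) (hint : Integrable g (thirdSideLaw γ₁ γ₂)) :
    ∫ z, g z ∂thirdSideLaw γ₁ γ₂ =
      ∫ φ, ∫ α, g (sinSqHalfThirdSide γ₁ γ₂ φ * sin α ^ 2) ∂halfCircleMeasure ∂circleMeasure := by
  rw [thirdSideLaw, integrable_map_measure hg.aestronglyMeasurable
    measurable_thirdSideLaw_map.aemeasurable] at hint
  rw [thirdSideLaw, integral_map measurable_thirdSideLaw_map.aemeasurable hg.aestronglyMeasurable]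
  exact integral_prod _ hint

lemma integral_shiftedChebyshevV_thirdSideLaw (γ₁ γ₂ : ℝ) (N : ℕ) :
    ∫ z, (shiftedChebyshevV N).eval z ∂thirdSideLaw γ₁ γ₂ =
      Polynomial.aeval (sin γ₁ ^ 2) (Polynomial.shiftedLegendre N) *
        Polynomial.aeval (sin γ₂ ^ 2) (Polynomial.shiftedLegendre N) := by
  have continuous_eval := (shiftedChebyshevV N).continuous
  rw [integral_thirdSideLaw continuous_eval.stronglyMeasurable
    (integrable_of_continuous_of_ae_mem_isCompact isCompact_Icc ae_thirdSideLaw_mem_Icc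
      continuous_eval)]
  simp only [integral_shiftedChebyshevV_mul_sin_sq,
    integral_aeval_shiftedLegendre_sinSqHalfThirdSide]

/-- The density `1 - tan A₁ tan A₂` of `angleSumLaw`, where `Aᵢ` are the Mehler angles. It turns
the denominator of `mehlerKernel` at `sin² (A₁ + A₂)` into that of a product of two kernels. -/
noncomputable def angleSumDensity (γ₁ γ₂ : ℝ) (p : ℝ × ℝ) : ℝ :=
  cos (mehlerAngle γ₁ p.1 + mehlerAngle γ₂ p.2) /
    (cos (mehlerAngle γ₁ p.1) * cos (mehlerAngle γ₂ p.2))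

/-- The law for which the product `P_ν (cos 2γ₁) P_ν (cos 2γ₂)` is the mean of
`mehlerKernel ν`. -/
noncomputable def angleSumLaw (γ₁ γ₂ : ℝ) : Measure ℝ :=
  ((halfCircleMeasure.prod halfCircleMeasure).withDensity fun p =>
    ENNReal.ofReal (angleSumDensity γ₁ γ₂ p)).map fun p =>
      sin (mehlerAngle γ₁ p.1 + mehlerAngle γ₂ p.2) ^ 2

lemma measurable_angleSumLaw_map :
    Measurable fun p : ℝ × ℝ => sin (mehlerAngle γ₁ p.1 + mehlerAngle γ₂ p.2) ^ 2 :=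
  Continuous.measurable (by fun_prop)

section Estimates

variable (h₁ : γ₁ ∈ Ico 0 (π / 2)) (h₂ : γ₂ ∈ Ico 0 (π / 2))

include h₁ h₂

lemma continuous_angleSumDensity : Continuous (angleSumDensity γ₁ γ₂) := by
  unfold angleSumDensity
  exact Continuous.div (by fun_prop) (by fun_prop) fun p =>
    (mul_pos (cos_mehlerAngle_pos h₁ _) (cos_mehlerAngle_pos h₂ _)).ne'

lemma isFiniteMeasure_angleSumLaw : IsFiniteMeasure (angleSumLaw γ₁ γ₂) := by
  have := isFiniteMeasure_withDensity_ofReal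
    (integrable_prod_cond_Ioo_of_continuous (continuous_angleSumDensity h₁ h₂) (-(π / 2)) (π / 2)
      (-(π / 2)) (π / 2)).hasFiniteIntegral
  unfold angleSumLaw
  infer_instance

variable (hs : γ₁ + γ₂ ≤ π / 2)

include hs

lemma abs_mehlerAngle_add_lt {α : ℝ} (hα : |α| < π / 2) (β : ℝ) :
    |mehlerAngle γ₁ α + mehlerAngle γ₂ β| < π / 2 := by
  have triangle := abs_add_le (mehlerAngle γ₁ α) (mehlerAngle γ₂ β)
  have le₂ := abs_mehlerAngle_le h₂ β
  rcases h₁.1.eq_or_lt with hzero | hpos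
  · linarith [abs_mehlerAngle_le h₁ α, h₂.2]
  · linarith [abs_mehlerAngle_lt ⟨hpos, h₁.2.le⟩ hα]

lemma ae_abs_mehlerAngle_add_lt : ∀ᵐ p ∂halfCircleMeasure.prod halfCircleMeasure,
    |mehlerAngle γ₁ p.1 + mehlerAngle γ₂ p.2| < π / 2 :=
  (Measure.quasiMeasurePreserving_fst.ae ae_halfCircleMeasure_abs_lt).mono fun p hp =>
    abs_mehlerAngle_add_lt h₁ h₂ hs hp p.2

lemma angleSumDensity_nonneg_ae :
    0 ≤ᵐ[halfCircleMeasure.prod halfCircleMeasure] angleSumDensity γ₁ γ₂ :=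
  (ae_abs_mehlerAngle_add_lt h₁ h₂ hs).mono fun p hp =>
    div_nonneg (cos_pos_of_mem_Ioo (abs_lt.1 hp)).le
      (mul_pos (cos_mehlerAngle_pos h₁ p.1) (cos_mehlerAngle_pos h₂ p.2)).le

lemma ae_angleSumLaw_mem_Ico : ∀ᵐ z ∂angleSumLaw γ₁ γ₂, z ∈ Ico 0 1 := by
  refine (ae_map_iff (p := (· ∈ Ico 0 1)) measurable_angleSumLaw_map.aemeasurable
    measurableSet_Ico).2 ((withDensity_absolutelyContinuous _ _).ae_le
      ((ae_abs_mehlerAngle_add_lt h₁ h₂ hs).mono fun p hp => ⟨sq_nonneg _, ?_⟩))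
  rw [sin_sq]
  exact sub_lt_self 1 (pow_pos (cos_pos_of_mem_Ioo (abs_lt.1 hp)) 2)

lemma angleSumDensity_smul_mehlerKernel_ae_eq (ν : ℂ) :
    (fun p => angleSumDensity γ₁ γ₂ p •
      mehlerKernel ν (sin (mehlerAngle γ₁ p.1 + mehlerAngle γ₂ p.2) ^ 2))
    =ᵐ[halfCircleMeasure.prod halfCircleMeasure] fun p =>
      mehlerCos ν γ₁ p.1 * mehlerCos ν γ₂ p.2 - mehlerSin ν γ₁ p.1 * mehlerSin ν γ₂ p.2 := by
  filter_upwards [ae_abs_mehlerAngle_add_lt h₁ h₂ hs] with p hp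
  have cos₁_ne_zero := Complex.ofReal_ne_zero.2 (cos_mehlerAngle_pos h₁ p.1).ne'
  have cos₂_ne_zero := Complex.ofReal_ne_zero.2 (cos_mehlerAngle_pos h₂ p.2).ne'
  have cos_add_ne_zero := Complex.ofReal_ne_zero.2 (cos_pos_of_mem_Ioo (abs_lt.1 hp)).ne'
  rw [mehlerKernel_sin_sq ν hp, angleSumDensity, Complex.real_smul, Complex.ofReal_add, mul_add,
    Complex.cos_add, Complex.ofReal_div, Complex.ofReal_mul, mehlerCos, mehlerCos, mehlerSin,
    mehlerSin]
  field_simp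

lemma integrable_mehlerKernel_angleSumLaw (ν : ℂ) :
    Integrable (mehlerKernel ν) (angleSumLaw γ₁ γ₂) := by
  have := continuous_mehlerCos ν h₁
  have := continuous_mehlerCos ν h₂
  have := continuous_mehlerSin ν h₁
  have := continuous_mehlerSin ν h₂
  rw [angleSumLaw, integrable_map_withDensity_ofReal
    (continuous_angleSumDensity h₁ h₂).measurable (angleSumDensity_nonneg_ae h₁ h₂ hs)
    measurable_angleSumLaw_map (measurable_mehlerKernel ν).stronglyMeasurable,
    integrable_congr (angleSumDensity_smul_mehlerKernel_ae_eq h₁ h₂ hs ν)]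
  exact integrable_prod_cond_Ioo_of_continuous (by fun_prop) _ _ _ _

lemma integral_mehlerKernel_angleSumLaw (ν : ℂ) :
    ∫ z, mehlerKernel ν z ∂angleSumLaw γ₁ γ₂ =
      legendreP ν (cos (2 * γ₁)) * legendreP ν (cos (2 * γ₂)) := by
  have := continuous_mehlerCos ν h₁
  have := continuous_mehlerCos ν h₂
  have := continuous_mehlerSin ν h₁
  have := continuous_mehlerSin ν h₂
  rw [angleSumLaw, integral_map_withDensity_ofReal
    (continuous_angleSumDensity h₁ h₂).measurable (angleSumDensity_nonneg_ae h₁ h₂ hs)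
    measurable_angleSumLaw_map (measurable_mehlerKernel ν).stronglyMeasurable,
    integral_congr_ae (angleSumDensity_smul_mehlerKernel_ae_eq h₁ h₂ hs ν),
    MeasureTheory.integral_sub (integrable_prod_cond_Ioo_of_continuous (by fun_prop) _ _ _ _)
      (integrable_prod_cond_Ioo_of_continuous (by fun_prop) _ _ _ _),
    integral_prod_mul, integral_prod_mul, integral_mehlerSin, zero_mul, sub_zero,
    integral_mehlerCos ν h₁, integral_mehlerCos ν h₂]

lemma integral_shiftedChebyshevV_angleSumLaw (N : ℕ) :
    ∫ z, (shiftedChebyshevV N).eval z ∂angleSumLaw γ₁ γ₂ =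
      Polynomial.aeval (sin γ₁ ^ 2) (Polynomial.shiftedLegendre N) *
        Polynomial.aeval (sin γ₂ ^ 2) (Polynomial.shiftedLegendre N) := by
  have kernel_eq : (fun z => (((shiftedChebyshevV N).eval z : ℝ) : ℂ)) =ᵐ[angleSumLaw γ₁ γ₂]
      mehlerKernel N :=
    (ae_angleSumLaw_mem_Ico h₁ h₂ hs).mono fun z hz => (mehlerKernel_natCast N hz).symm
  have sin_sq_mem {γ : ℝ} (hγ : γ ∈ Ico 0 (π / 2)) : sin γ ^ 2 ∈ Ico 0 1 := by
    have := cos_pos_of_mem_Ioo ⟨by linarith [hγ.1, pi_pos], hγ.2⟩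
    exact ⟨sq_nonneg _, by rw [sin_sq]; exact sub_lt_self 1 (by positivity)⟩
  apply Complex.ofReal_injective
  rw [← integral_complex_ofReal, integral_congr_ae kernel_eq,
    integral_mehlerKernel_angleSumLaw h₁ h₂ hs, cos_two_mul_eq_one_sub, cos_two_mul_eq_one_sub,
    legendreP_natCast N (sin_sq_mem h₁), legendreP_natCast N (sin_sq_mem h₂), Complex.ofReal_mul]

theorem thirdSideLaw_eq_angleSumLaw : thirdSideLaw γ₁ γ₂ = angleSumLaw γ₁ γ₂ := by
  have := isFiniteMeasure_angleSumLaw h₁ h₂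
  refine ext_of_forall_integral_polynomialSequence_eq ⟨shiftedChebyshevV, degree_shiftedChebyshevV⟩
    ae_thirdSideLaw_mem_Icc
    ((ae_angleSumLaw_mem_Ico h₁ h₂ hs).mono fun _ hz => Ico_subset_Icc_self hz) fun N => ?_
  exact (integral_shiftedChebyshevV_thirdSideLaw γ₁ γ₂ N).trans
    (integral_shiftedChebyshevV_angleSumLaw h₁ h₂ hs N).symm

theorem circleAverage_legendreP_eq_mul (ν : ℂ) :
    ∫ φ, legendreP ν (cos (2 * γ₁) * cos (2 * γ₂) + sin (2 * γ₁) * sin (2 * γ₂) * cos φ)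
        ∂circleMeasure =
      legendreP ν (cos (2 * γ₁)) * legendreP ν (cos (2 * γ₂)) := by
  have integrable_kernel : Integrable (mehlerKernel ν) (thirdSideLaw γ₁ γ₂) :=
    thirdSideLaw_eq_angleSumLaw h₁ h₂ hs ▸ integrable_mehlerKernel_angleSumLaw h₁ h₂ hs ν
  simp only [← one_sub_two_mul_sinSqHalfThirdSide,
    legendreP_one_sub_two_mul ν (sinSqHalfThirdSide_mem_Icc γ₁ γ₂ _)]
  rw [← integral_thirdSideLaw (measurable_mehlerKernel ν).stronglyMeasurable integrable_kernel,
    thirdSideLaw_eq_angleSumLaw h₁ h₂ hs, integral_mehlerKernel_angleSumLaw h₁ h₂ hs]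

end Estimates

end CouplingLaws

theorem legendreP_coupling (ν : ℂ) {θ₁ θ₂ : ℝ} (h₁ : θ₁ ∈ Set.Ico 0 π) (h₂ : θ₂ ∈ Set.Ico 0 π)
    (hs : θ₁ + θ₂ ≤ π) :
    ((1 / (2 * π) : ℝ) : ℂ) * ∫ φ in (0:ℝ)..(2 * π),
        legendreP ν (cos θ₁ * cos θ₂ + sin θ₁ * sin θ₂ * cos φ) =
      legendreP ν (cos θ₁) * legendreP ν (cos θ₂) := by
  have coupling := circleAverage_legendreP_eq_mul (γ₁ := θ₁ / 2) (γ₂ := θ₂ / 2)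
    ⟨by linarith [h₁.1], by linarith [h₁.2]⟩ ⟨by linarith [h₂.1], by linarith [h₂.2]⟩
    (by linarith) ν
  simpa only [integral_circleMeasure, mul_div_cancel₀ _ (two_ne_zero' ℝ), Complex.real_smul,
    one_div] using coupling

end HobsonCoupling

/-- Hobson coupling formula. -/
theorem stmt_1 (ν : ℂ) (θ₁ θ₂ : ℝ) (h₁ : θ₁ ∈ Set.Ico 0 π) (h₂ : θ₂ ∈ Set.Ico 0 π) :
    (θ₁ + θ₂ ≤ π →
      ((1 / (2*π) : ℝ) : ℂ) *
        ∫ φ in (0:ℝ)..(2*π),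
          legendreP ν (Real.cos θ₁ * Real.cos θ₂ + Real.sin θ₁ * Real.sin θ₂ * Real.cos φ)
      = legendreP ν (Real.cos θ₁) * legendreP ν (Real.cos θ₂)) ∧
    (π ≤ θ₁ + θ₂ →
      ((1 / (2*π) : ℝ) : ℂ) *
        ∫ φ in (0:ℝ)..(2*π),
          legendreP ν (Real.cos θ₁ * Real.cos θ₂ + Real.sin θ₁ * Real.sin θ₂ * Real.cos φ)
      = legendreP ν (-Real.cos θ₁) * legendreP ν (-Real.cos θ₂)) := by
  refine ⟨HobsonCoupling.legendreP_coupling ν h₁ h₂, fun hs => ?_⟩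
  have reflected := HobsonCoupling.legendreP_coupling ν (θ₁ := π - θ₁) (θ₂ := π - θ₂)
    ⟨by linarith [h₁.2], by linarith [h₂.2]⟩ ⟨by linarith [h₂.2], by linarith [h₁.2]⟩
    (by linarith)
  simpa only [Real.cos_pi_sub, Real.sin_pi_sub, neg_mul_neg] using reflected
end

section
/- For every θ ∈ [0, π/2], one has [K(sin(θ/2))]² = ∫_0^{π/2} K(sin θ cos φ) dφ. -/
open Real MeasureTheory intervalIntegral

/-- Complete elliptic integral of the first kind. -/
noncomputable def ellipticK (k : ℝ) : ℝ :=
  ∫ θ in (0:ℝ)..(π/2), 1 / Real.sqrt (1 - k^2 * Real.sin θ ^ 2)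

/-!
Write `F k x = ∑ cₙᵏ xⁿ`, where `cₙ` is the Wallis ratio, and `x = sin² (θ / 2)`. Expanding the
integrands into power series and integrating termwise with the Wallis integrals gives
`K(k) = π/2 · F 2 (k²)` and `∫ K(sin θ cos φ) dφ = (π/2)² · F 3 (sin² θ)`. As `sin² θ = 4x(1 - x)`,
the theorem is the Clausen-type identity `F 2 x ^ 2 = F 3 (4x(1 - x))` on `[0, 1/2]`.

With respect to the derivation `ϑ = x(1 - x) d/dx` the hypergeometric equation of `F 2` loses its
first-order term and becomes `ϑ² y = q y` with `q = x(1 - x)/4`. Hence `F 2 ^ 2` satisfies the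
symmetric square equation `ϑ³ S = 4q ϑS + 2(ϑq) S`, and so does `x ↦ F 3 (4x(1 - x))`. All exponents
of this equation at `0` vanish, so an analytic solution is determined near `0` by its value there;
analytic continuation and continuity extend the identity to `[0, 1/2]`.
-/

open Filter Topology
open FormalMultilinearSeries (ofScalars derivSeries_apply_diag le_radius_of_tendsto)

section FieldDeriv

variable {𝕜 : Type*} [NontriviallyNormedField 𝕜] {u v f g q y E W : 𝕜 → 𝕜} {x x₀ s : 𝕜}

/-- The Lie derivative of a function `g` along the vector field `v · d/dx` on the line. Iterating it
writes differential equations with regular singular points, the field `v x = x` giving the Euler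
operator `x · d/dx`. -/
noncomputable def fieldDeriv (v g : 𝕜 → 𝕜) (x : 𝕜) : 𝕜 := v x * deriv g x

lemma fieldDeriv_congr (h : f =ᶠ[𝓝 x] g) : fieldDeriv v f =ᶠ[𝓝 x] fieldDeriv v g := by
  filter_upwards [h.deriv] with z hz
  rw [fieldDeriv, hz, fieldDeriv]

lemma analyticAt_fieldDeriv [CompleteSpace 𝕜] (hv : AnalyticAt 𝕜 v x) (hg : AnalyticAt 𝕜 g x) :
    AnalyticAt 𝕜 (fieldDeriv v g) x :=
  hv.mul hg.deriv

lemma analyticAt_iterate_fieldDeriv [CompleteSpace 𝕜] (hv : AnalyticAt 𝕜 v x)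
    (hg : AnalyticAt 𝕜 g x) (j : ℕ) : AnalyticAt 𝕜 ((fieldDeriv v)^[j] g) x := by
  induction j with
  | zero => exact hg
  | succ j ih =>
    rw [Function.iterate_succ_apply']
    exact analyticAt_fieldDeriv hv ih

lemma fieldDeriv_add (hf : DifferentiableAt 𝕜 f x) (hg : DifferentiableAt 𝕜 g x) :
    fieldDeriv v (f + g) x = fieldDeriv v f x + fieldDeriv v g x := by
  simp only [fieldDeriv, deriv_add hf hg, mul_add]

lemma fieldDeriv_sub (hf : DifferentiableAt 𝕜 f x) (hg : DifferentiableAt 𝕜 g x) :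
    fieldDeriv v (f - g) x = fieldDeriv v f x - fieldDeriv v g x := by
  simp only [fieldDeriv, deriv_sub hf hg, mul_sub]

lemma fieldDeriv_mul (hf : DifferentiableAt 𝕜 f x) (hg : DifferentiableAt 𝕜 g x) :
    fieldDeriv v (f * g) x = fieldDeriv v f x * g x + f x * fieldDeriv v g x := by
  simp only [fieldDeriv, deriv_mul hf hg]
  ring

lemma fieldDeriv_sq (hf : DifferentiableAt 𝕜 f x) :
    fieldDeriv v (f ^ 2) x = 2 * f x * fieldDeriv v f x := by
  rw [sq, fieldDeriv_mul hf hf]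
  ring

lemma iterate_fieldDeriv_sub [CompleteSpace 𝕜] (hv : AnalyticAt 𝕜 v x) (hf : AnalyticAt 𝕜 f x)
    (hg : AnalyticAt 𝕜 g x) (j : ℕ) :
    (fieldDeriv v)^[j] (f - g) =ᶠ[𝓝 x] (fieldDeriv v)^[j] f - (fieldDeriv v)^[j] g := by
  induction j with
  | zero => rfl
  | succ j ih =>
    simp only [Function.iterate_succ_apply']
    refine (fieldDeriv_congr ih).trans ?_
    filter_upwards [(analyticAt_iterate_fieldDeriv hv hf j).eventually_analyticAt,
      (analyticAt_iterate_fieldDeriv hv hg j).eventually_analyticAt] with z hfz hgz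
    exact fieldDeriv_sub hfz.differentiableAt hgz.differentiableAt

lemma fieldDeriv_comp (hf : DifferentiableAt 𝕜 f (W x)) (hW : DifferentiableAt 𝕜 W x)
    (h : fieldDeriv v W x = s * u (W x)) :
    fieldDeriv v (f ∘ W) x = s * fieldDeriv u f (W x) := by
  rw [fieldDeriv] at h
  rw [fieldDeriv, deriv_comp x hf hW, fieldDeriv]
  linear_combination deriv f (W x) * h

/-- The symmetric square of the equation `D² y = q y`, where `D = fieldDeriv v`. -/
lemma iterate_fieldDeriv_three_sq [CompleteSpace 𝕜] (hv : AnalyticAt 𝕜 v x₀)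
    (hq : AnalyticAt 𝕜 q x₀) (hy : AnalyticAt 𝕜 y x₀)
    (h : fieldDeriv v (fieldDeriv v y) =ᶠ[𝓝 x₀] q * y) :
    (fieldDeriv v)^[3] (y ^ 2) =ᶠ[𝓝 x₀]
      4 * q * fieldDeriv v (y ^ 2) + 2 * fieldDeriv v q * y ^ 2 := by
  have hdiff : ∀ᶠ x in 𝓝 x₀, DifferentiableAt 𝕜 y x ∧ DifferentiableAt 𝕜 (fieldDeriv v y) x ∧
      DifferentiableAt 𝕜 q x := by
    filter_upwards [hy.eventually_analyticAt, (analyticAt_fieldDeriv hv hy).eventually_analyticAt,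
      hq.eventually_analyticAt] with x h₀ h₁ h₂
    exact ⟨h₀.differentiableAt, h₁.differentiableAt, h₂.differentiableAt⟩
  have hfirst : fieldDeriv v (y ^ 2) =ᶠ[𝓝 x₀] y * fieldDeriv v y + y * fieldDeriv v y := by
    filter_upwards [hdiff] with x ⟨hy, _, _⟩
    simp only [Pi.add_apply, Pi.mul_apply, fieldDeriv_sq hy]
    ring
  have hsecond : (fieldDeriv v)^[2] (y ^ 2) =ᶠ[𝓝 x₀]
      fieldDeriv v y ^ 2 + fieldDeriv v y ^ 2 + (q * y ^ 2 + q * y ^ 2) := by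
    refine (fieldDeriv_congr hfirst).trans ?_
    filter_upwards [hdiff, h] with x ⟨hy, hy₁, _⟩ hx
    rw [fieldDeriv_add (hy.mul hy₁) (hy.mul hy₁), fieldDeriv_mul hy hy₁, hx]
    simp only [Pi.add_apply, Pi.mul_apply, Pi.pow_apply]
    ring
  refine (fieldDeriv_congr hsecond).trans ?_
  filter_upwards [hdiff, h] with x ⟨hy, hy₁, hq⟩ hx
  have hy₁sq := hy₁.pow 2
  have hqy := hq.mul (hy.pow 2)
  rw [fieldDeriv_add (hy₁sq.add hy₁sq) (hqy.add hqy), fieldDeriv_add hy₁sq hy₁sq,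
    fieldDeriv_add hqy hqy, fieldDeriv_mul hq (hy.pow 2), fieldDeriv_sq hy₁, hx]
  simp only [Pi.add_apply, Pi.mul_apply, Pi.pow_apply, Pi.ofNat_apply, fieldDeriv_sq hy]
  ring

lemma fieldDeriv_pow_mul [CompleteSpace 𝕜] (hu : AnalyticAt 𝕜 u 0) (hg : AnalyticAt 𝕜 g 0) {m : ℕ}
    (hE : E =ᶠ[𝓝 0] fun x ↦ x ^ m * g x) :
    ∃ g₁, AnalyticAt 𝕜 g₁ 0 ∧ g₁ 0 = m * u 0 * g 0 ∧
      fieldDeriv (fun x ↦ x * u x) E =ᶠ[𝓝 0] fun x ↦ x ^ m * g₁ x := by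
  refine ⟨fun x ↦ u x * (m * g x + x * deriv g x), by fun_prop, by ring, ?_⟩
  filter_upwards [hE.deriv, hg.eventually_analyticAt] with x hx hgx
  rw [fieldDeriv, hx, ((hasDerivAt_pow m x).fun_mul hgx.differentiableAt.hasDerivAt).deriv]
  rcases m with _ | m
  · simp only [Nat.cast_zero, pow_zero]
    ring
  · simp only [Nat.add_sub_cancel]
    ring

lemma iterate_fieldDeriv_pow_mul [CompleteSpace 𝕜] (hu : AnalyticAt 𝕜 u 0)
    (hg : AnalyticAt 𝕜 g 0) {m : ℕ} (hE : E =ᶠ[𝓝 0] fun x ↦ x ^ m * g x) (j : ℕ) :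
    ∃ g₁, AnalyticAt 𝕜 g₁ 0 ∧ g₁ 0 = (m * u 0) ^ j * g 0 ∧
      (fieldDeriv fun x ↦ x * u x)^[j] E =ᶠ[𝓝 0] fun x ↦ x ^ m * g₁ x := by
  induction j with
  | zero => exact ⟨g, hg, by simp, hE⟩
  | succ j ih =>
    obtain ⟨g₁, hg₁, hg₁0, hE₁⟩ := ih
    obtain ⟨g₂, hg₂, hg₂0, hE₂⟩ := fieldDeriv_pow_mul hu hg₁ hE₁
    refine ⟨g₂, hg₂, by rw [hg₂0, hg₁0]; ring, ?_⟩
    rwa [Function.iterate_succ_apply']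

/-- The indicial equation at `0` is `(m * u 0) ^ N = 0`, so a nonzero solution cannot vanish
at `0`. -/
lemma eventually_eq_zero_of_iterate_fieldDeriv_eq_sum [CompleteSpace 𝕜] [CharZero 𝕜] {N : ℕ}
    {a : Fin N → 𝕜 → 𝕜} (hu : AnalyticAt 𝕜 u 0) (hu0 : u 0 ≠ 0) (hy : AnalyticAt 𝕜 y 0)
    (hy0 : y 0 = 0) (ha : ∀ j, ContinuousAt (a j) 0) (ha0 : ∀ j, a j 0 = 0)
    (h : (fieldDeriv fun x ↦ x * u x)^[N] y =ᶠ[𝓝 0]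
      fun x ↦ ∑ j, a j x * (fieldDeriv fun x ↦ x * u x)^[j] y x) :
    y =ᶠ[𝓝 0] 0 := by
  by_contra hne
  obtain ⟨m, g, hg, hg0, hyg⟩ := hy.exists_eventuallyEq_pow_smul_nonzero_iff.2 hne
  simp only [sub_zero, smul_eq_mul] at hyg
  have hm : m ≠ 0 := by
    rintro rfl
    exact hg0 (by simpa [hy0] using hyg.self_of_nhds.symm)
  choose G hG hG0 hyG using iterate_fieldDeriv_pow_mul hu hg hyg
  have hG_eq : G N =ᶠ[𝓝[≠] 0] fun x ↦ ∑ j : Fin N, a j x * G j x := by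
    filter_upwards [h.filter_mono nhdsWithin_le_nhds, (hyG N).filter_mono nhdsWithin_le_nhds,
      eventually_all.2 fun j : Fin N ↦ (hyG j).filter_mono nhdsWithin_le_nhds,
      self_mem_nhdsWithin] with x hx hxN hxj hx0
    apply mul_left_cancel₀ (pow_ne_zero m hx0)
    rw [← hxN, hx, Finset.mul_sum]
    exact Finset.sum_congr rfl fun j _ ↦ by rw [hxj j]; ring
  have hG_zero : G N 0 = ∑ j : Fin N, a j 0 * G j 0 :=
    ((hG N).continuousAt.eventuallyEq_nhds_iff_eventuallyEq_nhdsNE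
      (tendsto_finsetSum _ fun j _ ↦ (ha j).mul (hG j).continuousAt)).1 hG_eq |>.self_of_nhds
  simp only [hG0, ha0, zero_mul, Finset.sum_const_zero] at hG_zero
  exact mul_ne_zero (pow_ne_zero N (mul_ne_zero (Nat.cast_ne_zero.2 hm) hu0)) hg0 hG_zero

end FieldDeriv

section PowerSeries

variable {𝕜 : Type*} [RCLike 𝕜] {a : ℕ → 𝕜} {f : 𝕜 → 𝕜} {r : ENNReal} {x : 𝕜}

lemma hasSum_of_hasFPowerSeriesOnBall_ofScalars
    (h : HasFPowerSeriesOnBall f (ofScalars 𝕜 a) 0 r) (hx : x ∈ Metric.eball 0 r) :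
    HasSum (fun n ↦ a n * x ^ n) (f x) := by
  simpa [mul_comm] using h.hasSum hx

lemma hasFPowerSeriesOnBall_ofScalars_of_hasSum (hr : 0 < r)
    (h : ∀ x ∈ Metric.eball 0 r, HasSum (fun n ↦ a n * x ^ n) (f x)) :
    HasFPowerSeriesOnBall f (ofScalars 𝕜 a) 0 r where
  r_le := by
    refine ENNReal.le_of_forall_nnreal_lt fun s hs ↦ ?_
    have hs' : ((s : ℝ) : 𝕜) ∈ Metric.eball 0 r := by
      rwa [Metric.mem_eball, edist_zero_right, ← ofReal_norm, RCLike.norm_ofReal, NNReal.abs_eq,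
        ENNReal.ofReal_coe_nnreal]
    refine le_radius_of_tendsto _ (l := 0) ?_
    simpa using (h _ hs').summable.tendsto_atTop_zero.norm
  r_pos := hr
  hasSum {x} hx := by simpa [mul_comm] using h x hx

lemma hasFPowerSeriesOnBall_fieldDeriv_id
    (h : HasFPowerSeriesOnBall f (ofScalars 𝕜 a) 0 r) :
    HasFPowerSeriesOnBall (fieldDeriv (fun x ↦ x) f) (ofScalars 𝕜 fun n ↦ n * a n) 0 r := by
  refine hasFPowerSeriesOnBall_ofScalars_of_hasSum h.r_pos fun x hx ↦ ?_
  have key := (h.fderiv.hasSum hx).mapL (ContinuousLinearMap.apply 𝕜 𝕜 x)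
  rw [← hasSum_nat_add_iff' 1]
  simp only [ContinuousLinearMap.apply_apply, derivSeries_apply_diag] at key
  simpa [fieldDeriv, mul_assoc, mul_comm, mul_left_comm] using key

lemma hasFPowerSeriesOnBall_iterate_fieldDeriv_id
    (h : HasFPowerSeriesOnBall f (ofScalars 𝕜 a) 0 r) (j : ℕ) :
    HasFPowerSeriesOnBall ((fieldDeriv fun x ↦ x)^[j] f)
      (ofScalars 𝕜 fun n ↦ (n : 𝕜) ^ j * a n) 0 r := by
  induction j with
  | zero => simpa using h
  | succ j ih =>
    rw [Function.iterate_succ_apply']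
    simpa only [pow_succ', mul_assoc] using hasFPowerSeriesOnBall_fieldDeriv_id ih

end PowerSeries

section WallisSeries

/-- The Wallis ratio `(1 · 3 ⋯ (2n - 1)) / (2 · 4 ⋯ 2n) = (1/2)ₙ / n!`, which is the mean value of
`cos ^ (2 * n)` over a period. -/
noncomputable def wallisRatio (n : ℕ) : ℝ :=
  ∏ i ∈ Finset.range n, (2 * (i : ℝ) + 1) / (2 * i + 2)

lemma wallisRatio_zero : wallisRatio 0 = 1 := by simp [wallisRatio]

lemma wallisRatio_succ (n : ℕ) :
    wallisRatio (n + 1) = wallisRatio n * ((2 * (n : ℝ) + 1) / (2 * n + 2)) :=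
  Finset.prod_range_succ _ n

lemma succ_mul_wallisRatio_succ (n : ℕ) :
    ((n : ℝ) + 1) * wallisRatio (n + 1) = (n + 1 / 2) * wallisRatio n := by
  rw [wallisRatio_succ]
  field_simp

lemma wallisRatio_nonneg (n : ℕ) : 0 ≤ wallisRatio n :=
  Finset.prod_nonneg fun i _ ↦ by positivity

lemma wallisRatio_le_one (n : ℕ) : wallisRatio n ≤ 1 :=
  Finset.prod_le_one (fun i _ ↦ by positivity) fun i _ ↦ by
    rw [div_le_one (by positivity)]
    linarith

lemma wallisRatio_sq_le (n : ℕ) : wallisRatio n ^ 2 ≤ 1 / ((n : ℝ) + 1) := by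
  rw [le_div_iff₀ (by positivity)]
  induction n with
  | zero => simp [wallisRatio_zero]
  | succ n ih =>
    refine le_trans ?_ ih
    rw [wallisRatio_succ, mul_pow, mul_assoc]
    gcongr
    rw [div_pow, div_mul_eq_mul_div, div_le_iff₀ (by positivity)]
    push_cast
    nlinarith [(Nat.cast_nonneg n : (0 : ℝ) ≤ n)]

lemma summable_wallisRatio_pow_three : Summable fun n ↦ wallisRatio n ^ 3 := by
  have hp : Summable fun n : ℕ ↦ (1 / ((n : ℝ) + 1)) ^ (3 / 2 : ℝ) := by
    have := (summable_nat_add_iff 1).2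
      (Real.summable_one_div_nat_rpow.2 (by norm_num : (1 : ℝ) < 3 / 2))
    refine this.congr fun n ↦ ?_
    rw [Real.div_rpow zero_le_one (by positivity), Real.one_rpow, Nat.cast_succ]
  refine hp.of_nonneg_of_le (fun n ↦ pow_nonneg (wallisRatio_nonneg n) 3) fun n ↦ ?_
  calc wallisRatio n ^ 3 = (wallisRatio n ^ 2) ^ (3 / 2 : ℝ) := by
        rw [← Real.rpow_natCast, ← Real.rpow_natCast, ← Real.rpow_mul (wallisRatio_nonneg n)]
        norm_num
    _ ≤ (1 / ((n : ℝ) + 1)) ^ (3 / 2 : ℝ) :=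
        Real.rpow_le_rpow (sq_nonneg _) (wallisRatio_sq_le n) (by norm_num)

lemma ringChoose_eq_wallisRatio (n : ℕ) : Ring.choose (1 / 2 + (n : ℝ) - 1) n = wallisRatio n := by
  have hpoch : (ascPochhammer ℝ n).eval (1 / 2) = n.factorial * wallisRatio n := by
    induction n with
    | zero => simp [wallisRatio_zero]
    | succ n ih =>
      rw [ascPochhammer_succ_eval, ih, Nat.factorial_succ]
      push_cast
      linear_combination -(n.factorial : ℝ) * succ_mul_wallisRatio_succ n
  have hchoose := Ring.factorial_nsmul_multichoose_eq_ascPochhammer (1 / 2 : ℝ) n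
  rw [Polynomial.ascPochhammer_smeval_eq_eval, hpoch, nsmul_eq_mul] at hchoose
  rw [Ring.choose, show (1 / 2 + (n : ℝ) - 1 - n + 1) = 1 / 2 by ring]
  exact mul_left_cancel₀ (by positivity) hchoose

/-- The hypergeometric function `ₖFₖ₋₁(1/2, …, 1/2; 1, …, 1; x)`, with value `0` where the series
diverges. -/
noncomputable def wallisSeries (k : ℕ) (x : ℝ) : ℝ := ∑' n, wallisRatio n ^ k * x ^ n

variable {x : ℝ}

lemma mem_eball_zero_one_iff : x ∈ Metric.eball (0 : ℝ) 1 ↔ |x| < 1 := by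
  simp [Metric.mem_eball, edist_zero_right, ← ofReal_norm]

lemma wallisSeries_apply_zero (k : ℕ) : wallisSeries k 0 = 1 := by
  rw [wallisSeries, tsum_eq_single 0 fun n hn ↦ by simp [hn]]
  simp [wallisRatio_zero]

lemma hasFPowerSeriesOnBall_wallisSeries (k : ℕ) :
    HasFPowerSeriesOnBall (wallisSeries k) (ofScalars ℝ fun n ↦ wallisRatio n ^ k) 0 1 := by
  refine hasFPowerSeriesOnBall_ofScalars_of_hasSum one_pos fun x hx ↦ Summable.hasSum ?_
  have hx : ‖x‖ < 1 := mem_eball_zero_one_iff.1 hx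
  refine .of_norm_bounded (summable_geometric_of_lt_one (norm_nonneg x) hx) fun n ↦ ?_
  rw [norm_mul, norm_pow, norm_pow, Real.norm_of_nonneg (wallisRatio_nonneg n)]
  exact mul_le_of_le_one_left (by positivity)
    (pow_le_one₀ (wallisRatio_nonneg n) (wallisRatio_le_one n))

lemma analyticAt_wallisSeries (k : ℕ) (hx : |x| < 1) : AnalyticAt ℝ (wallisSeries k) x :=
  (hasFPowerSeriesOnBall_wallisSeries k).analyticAt_of_mem (mem_eball_zero_one_iff.2 hx)

lemma hasSum_wallisSeries (k : ℕ) (hx : |x| < 1) :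
    HasSum (fun n ↦ wallisRatio n ^ k * x ^ n) (wallisSeries k x) :=
  hasSum_of_hasFPowerSeriesOnBall_ofScalars (hasFPowerSeriesOnBall_wallisSeries k)
    (mem_eball_zero_one_iff.2 hx)

lemma wallisSeries_one (hx : |x| < 1) : wallisSeries 1 x = 1 / √(1 - x) := by
  have h := hasSum_of_hasFPowerSeriesOnBall_ofScalars
    (Real.one_div_one_sub_rpow_hasFPowerSeriesOnBall_zero (1 / 2)) (mem_eball_zero_one_iff.2 hx)
  simp only [ringChoose_eq_wallisRatio] at h
  rw [Real.sqrt_eq_rpow, ← h.tsum_eq]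
  simp only [wallisSeries, pow_one]

lemma continuousOn_wallisSeries_three : ContinuousOn (wallisSeries 3) (Set.Icc (-1) 1) := by
  refine continuousOn_tsum (fun n ↦ by fun_prop) summable_wallisRatio_pow_three fun n x hx ↦ ?_
  rw [norm_mul, Real.norm_of_nonneg (pow_nonneg (wallisRatio_nonneg n) 3), norm_pow]
  exact mul_le_of_le_one_right (pow_nonneg (wallisRatio_nonneg n) 3)
    (pow_le_one₀ (norm_nonneg _) (abs_le.2 hx))

local notation "δ" => fieldDeriv (fun x : ℝ ↦ x)
local notation "ϑ" => fieldDeriv (fun x : ℝ ↦ x * (1 - x))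

/-- The hypergeometric equation `δᵏ f = x (δ + 1/2)ᵏ f`, expanded by the binomial theorem. -/
lemma iterate_fieldDeriv_wallisSeries {k : ℕ} (hk : k ≠ 0) (hx : |x| < 1) :
    δ^[k] (wallisSeries k) x =
      x * ∑ j ∈ Finset.range (k + 1),
        (1 / 2) ^ (k - j) * k.choose j * δ^[j] (wallisSeries k) x := by
  have hδ (j : ℕ) : HasSum (fun n : ℕ ↦ (n : ℝ) ^ j * wallisRatio n ^ k * x ^ n)
      (δ^[j] (wallisSeries k) x) :=
    hasSum_of_hasFPowerSeriesOnBall_ofScalars (hasFPowerSeriesOnBall_iterate_fieldDeriv_id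
      (hasFPowerSeriesOnBall_wallisSeries k) j) (mem_eball_zero_one_iff.2 hx)
  have hlhs := (hasSum_nat_add_iff' 1).2 (hδ k)
  have hrhs := (hasSum_sum fun j (_ : j ∈ Finset.range (k + 1)) ↦
    (hδ j).mul_left ((1 / 2) ^ (k - j) * (k.choose j : ℝ))).mul_left x
  simp only [Finset.range_one, Finset.sum_singleton, Nat.cast_zero, zero_pow hk, zero_mul,
    sub_zero] at hlhs
  refine hlhs.unique (hrhs.congr_fun fun n ↦ ?_)
  have hrec : ((n : ℝ) + 1) ^ k * wallisRatio (n + 1) ^ k =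
      (∑ j ∈ Finset.range (k + 1), (n : ℝ) ^ j * (1 / 2) ^ (k - j) * k.choose j) *
        wallisRatio n ^ k := by
    rw [← mul_pow, succ_mul_wallisRatio_succ, mul_pow, add_pow]
  rw [Nat.cast_succ, hrec, Finset.sum_mul, Finset.sum_mul, Finset.mul_sum]
  exact Finset.sum_congr rfl fun j _ ↦ by ring

lemma fieldDeriv_fieldDeriv_wallisSeries_two (hx : |x| < 1) :
    ϑ (ϑ (wallisSeries 2)) x = x * (1 - x) / 4 * wallisSeries 2 x := by
  have hϑ (g : ℝ → ℝ) : ϑ g = (fun x ↦ 1 - x) * δ g := by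
    ext x
    simp only [fieldDeriv, Pi.mul_apply]
    ring
  have hδ : AnalyticAt ℝ (δ (wallisSeries 2)) x :=
    analyticAt_fieldDeriv analyticAt_id (analyticAt_wallisSeries 2 hx)
  have hode : δ (δ (wallisSeries 2)) x =
      x * (1 / 4 * wallisSeries 2 x + δ (wallisSeries 2) x + δ (δ (wallisSeries 2)) x) := by
    refine (iterate_fieldDeriv_wallisSeries two_ne_zero hx).trans ?_
    norm_num [Finset.sum_range_succ]
  have hϑ_sub : ϑ (fun x ↦ 1 - x) x = -(x * (1 - x)) := by simp [fieldDeriv]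
  rw [hϑ (wallisSeries 2), fieldDeriv_mul (by fun_prop) hδ.differentiableAt,
    hϑ (δ (wallisSeries 2)), hϑ_sub]
  simp only [Pi.mul_apply]
  linear_combination (1 - x) * hode

lemma iterate_fieldDeriv_three_wallisSeries_two_sq (hx : |x| < 1) :
    ϑ^[3] (wallisSeries 2 ^ 2) x =
      x * (1 - x) * ϑ (wallisSeries 2 ^ 2) x +
        x * (1 - x) * (1 - 2 * x) / 2 * (wallisSeries 2 ^ 2) x := by
  have hϑq : ϑ (fun z ↦ z * (1 - z) / 4) x = x * (1 - x) * (1 - 2 * x) / 4 := by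
    have h := ((hasDerivAt_id' x).fun_mul ((hasDerivAt_id' x).const_sub 1)).div_const 4
    rw [fieldDeriv, h.deriv]
    ring
  have hode : ϑ (ϑ (wallisSeries 2)) =ᶠ[𝓝 x] (fun z ↦ z * (1 - z) / 4) * wallisSeries 2 :=
    (continuous_abs.continuousAt.eventually_lt_const hx).mono fun _ ↦
      fieldDeriv_fieldDeriv_wallisSeries_two
  rw [(iterate_fieldDeriv_three_sq (by fun_prop) (by fun_prop) (analyticAt_wallisSeries 2 hx)
    hode).self_of_nhds]
  simp only [Pi.add_apply, Pi.mul_apply, Pi.ofNat_apply, hϑq]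
  ring

/-- The degree two change of variable `x ↦ 4x(1 - x)` in Clausen's identity. -/
def logisticMap (x : ℝ) : ℝ := 4 * x * (1 - x)

lemma analyticAt_logisticMap (x : ℝ) : AnalyticAt ℝ logisticMap x := by
  unfold logisticMap
  fun_prop

lemma hasDerivAt_logisticMap (x : ℝ) : HasDerivAt logisticMap (4 * (1 - 2 * x)) x := by
  refine (((hasDerivAt_id x).const_mul 4).mul ((hasDerivAt_id x).const_sub 1)).congr_deriv ?_
  simp only [id_eq]
  ring

lemma fieldDeriv_logisticMap (x : ℝ) : ϑ logisticMap x = (1 - 2 * x) * logisticMap x := by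
  rw [fieldDeriv, (hasDerivAt_logisticMap x).deriv, logisticMap]
  ring

lemma fieldDeriv_comp_logisticMap {f : ℝ → ℝ} (hf : DifferentiableAt ℝ f (logisticMap x)) :
    ϑ (f ∘ logisticMap) x = (1 - 2 * x) * δ f (logisticMap x) :=
  fieldDeriv_comp hf (analyticAt_logisticMap x).differentiableAt (fieldDeriv_logisticMap x)

lemma fieldDeriv_fieldDeriv_comp_logisticMap {f : ℝ → ℝ} (hf : AnalyticAt ℝ f (logisticMap x)) :
    ϑ (ϑ (f ∘ logisticMap)) x =
      (1 - logisticMap x) * δ (δ f) (logisticMap x) - logisticMap x / 2 * δ f (logisticMap x) := by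
  have hW := (analyticAt_logisticMap x).differentiableAt
  have hδf : DifferentiableAt ℝ (δ f) (logisticMap x) :=
    (analyticAt_fieldDeriv analyticAt_id hf).differentiableAt
  have hfirst : ϑ (f ∘ logisticMap) =ᶠ[𝓝 x] (fun z ↦ 1 - 2 * z) * (δ f ∘ logisticMap) := by
    filter_upwards [hW.continuousAt.eventually hf.eventually_analyticAt] with z hz
    exact fieldDeriv_comp_logisticMap hz.differentiableAt
  have hsub : ϑ (fun z ↦ 1 - 2 * z) x = -(logisticMap x / 2) := by
    rw [fieldDeriv, (((hasDerivAt_id' x).const_mul 2).const_sub 1).deriv, logisticMap]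
    ring
  rw [(fieldDeriv_congr hfirst).self_of_nhds, fieldDeriv_mul (by fun_prop) (hδf.comp x hW), hsub,
    fieldDeriv_comp_logisticMap hδf]
  simp only [Function.comp_apply, logisticMap]
  ring

lemma iterate_fieldDeriv_three_comp_logisticMap {f : ℝ → ℝ} (hf : AnalyticAt ℝ f (logisticMap x)) :
    ϑ^[3] (f ∘ logisticMap) x = (1 - 2 * x) *
      ((1 - logisticMap x) * δ^[3] f (logisticMap x) -
        3 / 2 * logisticMap x * δ^[2] f (logisticMap x) -
        1 / 2 * logisticMap x * δ f (logisticMap x)) := by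
  have hW := (analyticAt_logisticMap x).differentiableAt
  have hδf' : AnalyticAt ℝ (δ f) (logisticMap x) := analyticAt_fieldDeriv analyticAt_id hf
  have hδf := hδf'.differentiableAt
  have hδδf : DifferentiableAt ℝ (δ (δ f)) (logisticMap x) :=
    (analyticAt_fieldDeriv analyticAt_id hδf').differentiableAt
  have hsecond : ϑ^[2] (f ∘ logisticMap) =ᶠ[𝓝 x]
      ((fun w ↦ 1 - w) * δ (δ f) - (fun w ↦ w / 2) * δ f) ∘ logisticMap := by
    filter_upwards [hW.continuousAt.eventually hf.eventually_analyticAt] with z hz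
    exact fieldDeriv_fieldDeriv_comp_logisticMap hz
  have hδsub (w : ℝ) : δ (fun w ↦ 1 - w) w = -w := by simp [fieldDeriv]
  have hδhalf (w : ℝ) : δ (fun w ↦ w / 2) w = w / 2 := by simp [fieldDeriv, div_eq_mul_inv]
  have hsub : DifferentiableAt ℝ (fun w : ℝ ↦ 1 - w) (logisticMap x) := by fun_prop
  have hhalf : DifferentiableAt ℝ (fun w : ℝ ↦ w / 2) (logisticMap x) := by fun_prop
  rw [Function.iterate_succ_apply', (fieldDeriv_congr hsecond).self_of_nhds,
    fieldDeriv_comp_logisticMap ((hsub.mul hδδf).sub (hhalf.mul hδf)),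
    fieldDeriv_sub (hsub.mul hδδf) (hhalf.mul hδf), fieldDeriv_mul hsub hδδf,
    fieldDeriv_mul hhalf hδf, hδsub, hδhalf]
  simp only [Function.iterate_succ, Function.iterate_zero, Function.comp_apply, id]
  ring

lemma iterate_fieldDeriv_three_wallisSeries_three_comp_logisticMap (hx : |logisticMap x| < 1) :
    ϑ^[3] (wallisSeries 3 ∘ logisticMap) x =
      x * (1 - x) * ϑ (wallisSeries 3 ∘ logisticMap) x +
        x * (1 - x) * (1 - 2 * x) / 2 * (wallisSeries 3 ∘ logisticMap) x := by
  have hF := analyticAt_wallisSeries 3 hx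
  set w := logisticMap x
  have hode : δ^[3] (wallisSeries 3) w = w * (1 / 8 * wallisSeries 3 w +
      3 / 4 * δ (wallisSeries 3) w + 3 / 2 * δ^[2] (wallisSeries 3) w +
      δ^[3] (wallisSeries 3) w) := by
    refine (iterate_fieldDeriv_wallisSeries three_ne_zero hx).trans ?_
    norm_num [Finset.sum_range_succ, Nat.choose]
  have hw : x * (1 - x) = w / 4 := by
    simp only [w, logisticMap]
    ring
  rw [iterate_fieldDeriv_three_comp_logisticMap hF,
    fieldDeriv_comp_logisticMap hF.differentiableAt, hw, Function.comp_apply]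
  linear_combination (1 - 2 * x) * hode

lemma wallisSeries_two_sq_eventuallyEq :
    wallisSeries 2 ^ 2 =ᶠ[𝓝 0] wallisSeries 3 ∘ logisticMap := by
  set S := wallisSeries 2 ^ 2
  set H := wallisSeries 3 ∘ logisticMap
  have hv : AnalyticAt ℝ (fun x : ℝ ↦ x * (1 - x)) 0 := by fun_prop
  have hS : AnalyticAt ℝ S 0 := (analyticAt_wallisSeries 2 (by simp)).pow 2
  have hH : AnalyticAt ℝ H 0 := (analyticAt_wallisSeries 3 (by simp [logisticMap])).comp
    (analyticAt_logisticMap 0)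
  have hsmall : ∀ᶠ x : ℝ in 𝓝 0, |x| < 1 ∧ |logisticMap x| < 1 :=
    (continuousAt_id.abs.eventually_lt_const (by simp)).and
      ((analyticAt_logisticMap 0).continuousAt.abs.eventually_lt_const (by simp [logisticMap]))
  suffices hD : S - H =ᶠ[𝓝 0] 0 from hD.mono fun x hx ↦ sub_eq_zero.1 hx
  refine eventually_eq_zero_of_iterate_fieldDeriv_eq_sum (u := fun x ↦ 1 - x)
    (a := ![fun x ↦ x * (1 - x) * (1 - 2 * x) / 2, fun x ↦ x * (1 - x), 0])
    (by fun_prop) (by simp) (hS.sub hH) (by simp [S, H, logisticMap, wallisSeries_apply_zero])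
    (fun j ↦ ?_) (fun j ↦ by fin_cases j <;> simp) ?_
  · fin_cases j
    exacts [by dsimp; fun_prop, by dsimp; fun_prop, continuousAt_const]
  filter_upwards [hsmall, iterate_fieldDeriv_sub hv hS hH 3, iterate_fieldDeriv_sub hv hS hH 1]
    with x ⟨hx, hxW⟩ h₃ h₁
  have hS₃ : ϑ^[3] S x = x * (1 - x) * ϑ S x + x * (1 - x) * (1 - 2 * x) / 2 * S x :=
    iterate_fieldDeriv_three_wallisSeries_two_sq hx
  have hH₃ : ϑ^[3] H x = x * (1 - x) * ϑ H x + x * (1 - x) * (1 - 2 * x) / 2 * H x :=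
    iterate_fieldDeriv_three_wallisSeries_three_comp_logisticMap hxW
  rw [h₃, Pi.sub_apply, hS₃, hH₃, Fin.sum_univ_three]
  simp only [Function.iterate_one, Pi.sub_apply] at h₁
  simp only [Matrix.cons_val, Function.iterate_zero, Function.iterate_one, id_eq, Pi.sub_apply,
    Pi.zero_apply, zero_mul, add_zero, Fin.coe_ofNat_eq_mod, Nat.zero_mod, Nat.one_mod, h₁]
  ring

/-- Clausen's identity with parameters `1/2, 1/2`, combined with a quadratic transformation. -/
lemma wallisSeries_two_sq (hx : x ∈ Set.Icc 0 (1 / 2)) :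
    wallisSeries 2 x ^ 2 = wallisSeries 3 (logisticMap x) := by
  have hF {z : ℝ} (hz : z ∈ Set.Icc 0 (1 / 2)) : AnalyticAt ℝ (wallisSeries 2 ^ 2) z :=
    (analyticAt_wallisSeries 2 (abs_lt.2 ⟨by linarith [hz.1], by linarith [hz.2]⟩)).pow 2
  have hEq : Set.EqOn (wallisSeries 2 ^ 2) (wallisSeries 3 ∘ logisticMap) (Set.Ico 0 (1 / 2)) := by
    refine AnalyticOnNhd.eqOn_of_preconnected_of_eventuallyEq
      (fun z hz ↦ hF (Set.Ico_subset_Icc_self hz)) (fun z hz ↦ ?_) isPreconnected_Ico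
      ⟨le_rfl, by norm_num⟩ wallisSeries_two_sq_eventuallyEq
    have hz1 : |logisticMap z| < 1 := by
      rw [logisticMap, abs_lt]
      constructor <;> nlinarith [hz.1, hz.2]
    exact (analyticAt_wallisSeries 3 hz1).comp (analyticAt_logisticMap z)
  have hmaps : Set.MapsTo logisticMap (Set.Icc 0 (1 / 2)) (Set.Icc (-1) 1) := fun z hz ↦ by
    rw [logisticMap]
    constructor <;> nlinarith [hz.1, hz.2]
  have hcont : ContinuousOn logisticMap (Set.Icc 0 (1 / 2)) := fun z _ ↦
    (analyticAt_logisticMap z).continuousAt.continuousWithinAt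
  exact hEq.of_subset_closure (fun z hz ↦ (hF hz).continuousAt.continuousWithinAt)
    (continuousOn_wallisSeries_three.comp hcont hmaps) Set.Ico_subset_Icc_self
    (closure_Ico (by norm_num)).ge hx

end WallisSeries

section Integral

lemma hasSum_intervalIntegral_of_nonneg {a b : ℝ} (hab : a ≤ b) {f : ℕ → ℝ → ℝ} {F : ℝ → ℝ}
    (hf : ∀ n, IntervalIntegrable (f n) volume a b) (hf0 : ∀ n, ∀ t ∈ Set.Ioo a b, 0 ≤ f n t)
    (hs : Summable fun n ↦ ∫ t in a..b, f n t)
    (hF : ∀ t ∈ Set.Ioo a b, HasSum (f · t) (F t)) :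
    HasSum (fun n ↦ ∫ t in a..b, f n t) (∫ t in a..b, F t) := by
  simp only [intervalIntegral.integral_of_le hab, integral_Ioc_eq_integral_Ioo] at hs ⊢
  have hnorm (n : ℕ) : ∫ t in Set.Ioo a b, ‖f n t‖ = ∫ t in Set.Ioo a b, f n t :=
    setIntegral_congr_fun measurableSet_Ioo fun t ht ↦ Real.norm_of_nonneg (hf0 n t ht)
  rw [← setIntegral_congr_fun measurableSet_Ioo fun t ht ↦ (hF t ht).tsum_eq]
  exact hasSum_integral_of_summable_integral_norm
    (fun n ↦ (intervalIntegrable_iff_integrableOn_Ioo_of_le hab).1 (hf n)) (by simpa only [hnorm])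

lemma integral_cos_sq_pow (n : ℕ) :
    ∫ t in (0 : ℝ)..(π / 2), (cos t ^ 2) ^ n = π / 2 * wallisRatio n := by
  simp_rw [← pow_mul]
  rw [EulerSine.integral_cos_pow_eq, integral_sin_pow_even, wallisRatio]
  ring

lemma integral_wallisSeries_mul_cos_sq {k : ℕ} {w : ℝ} (hw0 : 0 ≤ w) (hw1 : w ≤ 1)
    (hs : Summable fun n ↦ wallisRatio n ^ (k + 1) * w ^ n) :
    ∫ t in (0 : ℝ)..(π / 2), wallisSeries k (w * cos t ^ 2) = π / 2 * wallisSeries (k + 1) w := by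
  have hterm (n : ℕ) : ∫ t in (0 : ℝ)..(π / 2), wallisRatio n ^ k * (w * cos t ^ 2) ^ n =
      π / 2 * (wallisRatio n ^ (k + 1) * w ^ n) := by
    simp_rw [mul_pow w, ← mul_assoc]
    rw [intervalIntegral.integral_const_mul, integral_cos_sq_pow]
    ring
  have hsum := hasSum_intervalIntegral_of_nonneg (F := fun t ↦ wallisSeries k (w * cos t ^ 2))
    pi_div_two_pos.le (fun n ↦ Continuous.intervalIntegrable (by fun_prop) _ _)
    (fun n t _ ↦ mul_nonneg (pow_nonneg (wallisRatio_nonneg n) k) (by positivity))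
    (by simpa only [hterm] using hs.mul_left (π / 2)) fun t ht ↦ hasSum_wallisSeries k ?_
  · rw [← hsum.tsum_eq, wallisSeries, ← tsum_mul_left]
    exact tsum_congr hterm
  · have hsin : 0 < sin t := sin_pos_of_pos_of_lt_pi ht.1 (by linarith [ht.2, pi_pos])
    rw [abs_of_nonneg (by positivity)]
    nlinarith [sin_sq_add_cos_sq t]

lemma integral_wallisSeries_mul_sin_sq {k : ℕ} {w : ℝ} (hw0 : 0 ≤ w) (hw1 : w ≤ 1)
    (hs : Summable fun n ↦ wallisRatio n ^ (k + 1) * w ^ n) :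
    ∫ t in (0 : ℝ)..(π / 2), wallisSeries k (w * sin t ^ 2) = π / 2 * wallisSeries (k + 1) w := by
  rw [← integral_wallisSeries_mul_cos_sq hw0 hw1 hs]
  simpa [cos_pi_div_two_sub] using intervalIntegral.integral_comp_sub_left (a := 0) (b := π / 2)
    (fun t ↦ wallisSeries k (w * cos t ^ 2)) (π / 2)

end Integral

lemma ellipticK_eq_wallisSeries {k : ℝ} (hk : k ^ 2 < 1) :
    ellipticK k = π / 2 * wallisSeries 2 (k ^ 2) := by
  have hw : |k ^ 2| < 1 := by rwa [abs_of_nonneg (sq_nonneg k)]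
  rw [← integral_wallisSeries_mul_sin_sq (sq_nonneg k) hk.le (hasSum_wallisSeries 2 hw).summable]
  refine intervalIntegral.integral_congr fun t _ ↦ (wallisSeries_one ?_).symm
  rw [abs_of_nonneg (by positivity)]
  exact (mul_le_of_le_one_right (sq_nonneg k) (sin_sq_le_one t)).trans_lt hk

lemma integral_ellipticK_mul_cos {s : ℝ} (hs : s ^ 2 ≤ 1) :
    ∫ φ in (0 : ℝ)..(π / 2), ellipticK (s * cos φ) = (π / 2) ^ 2 * wallisSeries 3 (s ^ 2) := by
  have hsum : Summable fun n ↦ wallisRatio n ^ 3 * (s ^ 2) ^ n :=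
    summable_wallisRatio_pow_three.of_nonneg_of_le
      (fun n ↦ mul_nonneg (pow_nonneg (wallisRatio_nonneg n) 3) (by positivity))
      fun n ↦ mul_le_of_le_one_right (pow_nonneg (wallisRatio_nonneg n) 3)
        (pow_le_one₀ (sq_nonneg s) hs)
  rw [sq (π / 2), mul_assoc, ← integral_wallisSeries_mul_cos_sq (sq_nonneg s) hs hsum,
    ← intervalIntegral.integral_const_mul]
  -- The endpoint `φ = 0` is avoided: for `s = ±1` the integral defining `ellipticK s` diverges.
  refine intervalIntegral.integral_congr_Ioo_of_le pi_div_two_pos.le fun φ hφ ↦ ?_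
  have hsin : 0 < sin φ := sin_pos_of_pos_of_lt_pi hφ.1 (by linarith [hφ.2, pi_pos])
  have hlt : (s * cos φ) ^ 2 < 1 := by nlinarith [sin_sq_add_cos_sq φ]
  simp only [ellipticK_eq_wallisSeries hlt, mul_pow]

theorem stmt_2_general (θ : ℝ) (hθ : 0 ≤ cos θ) :
    (ellipticK (Real.sin (θ/2)))^2
      = ∫ φ in (0:ℝ)..(π/2), ellipticK (Real.sin θ * Real.cos φ) := by
  have hhalf : sin (θ / 2) ^ 2 = (1 - cos θ) / 2 := by
    rw [sin_sq_eq_half_sub, mul_div_cancel₀ θ two_ne_zero]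
    ring
  have hx : sin (θ / 2) ^ 2 ∈ Set.Icc 0 (1 / 2) := ⟨sq_nonneg _, by linarith⟩
  have hmap : logisticMap (sin (θ / 2) ^ 2) = sin θ ^ 2 := by
    rw [hhalf, logisticMap, sin_sq]
    ring
  calc ellipticK (sin (θ / 2)) ^ 2
      = (π / 2) ^ 2 * wallisSeries 2 (sin (θ / 2) ^ 2) ^ 2 := by
        rw [ellipticK_eq_wallisSeries (by linarith [hx.2]), mul_pow]
    _ = (π / 2) ^ 2 * wallisSeries 3 (sin θ ^ 2) := by rw [wallisSeries_two_sq hx, hmap]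
    _ = ∫ φ in (0 : ℝ)..(π / 2), ellipticK (sin θ * cos φ) :=
        (integral_ellipticK_mul_cos (sin_sq_le_one θ)).symm

theorem stmt_2 (θ : ℝ) (hθ : θ ∈ Set.Icc 0 (π/2)) :
    (ellipticK (Real.sin (θ/2)))^2
      = ∫ φ in (0:ℝ)..(π/2), ellipticK (Real.sin θ * Real.cos φ) :=
  stmt_2_general θ (cos_nonneg_of_mem_Icc ⟨by linarith [hθ.1, pi_pos], hθ.2⟩)
end

section
/- Recursion for generalized Clebsch–Gordan integrals: for all μ, ν ∈ ℂ, (μ+1)² [(μ+1)² − (2ν+1)²] T_{μ+1,ν} − μ² [μ² − (2ν+1)²] T_{μ−1,ν} = 4 (2μ+1) sin(μπ) sin(νπ) / π². -/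
open Real MeasureTheory intervalIntegral

/-- The generalized Clebsch–Gordan integral `T μ ν = ∫_{-1}^1 P_μ(x) P_ν(x) P_ν(-x) dx`. -/
noncomputable def T (μ ν : ℂ) : ℂ :=
  ∫ x in (-1:ℝ)..1, legendreP μ x * legendreP ν x * legendreP ν (-x)

/-!
With `θ = (1 - x²) d/dx` and `κ = ν (ν + 1)`, Legendre's equation of degree `ν` reads
`θ² u = -κ (1 - x²) u`. The product `w(x) = P_ν(x) P_ν(-x)` of two of its solutions is therefore
killed by Appell's third-order operator `θ³ + 4 κ (1 - x²) θ + 2 κ θ(1 - x²)`, which is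
anti-self-adjoint for `dx / (1 - x²)`. Applied to `P_μ`, divided by `1 - x²` and multiplied by
`2μ + 1`, the same operator gives, by the ladder relations, the combination of `P_{μ+1}` and
`P_{μ-1}` in the recursion. The left-hand side is thus a boundary value of the bilinear concomitant
of `P_μ` and `w`; only `x → -1` contributes, through `(1 - x²) P_ν'(x) → 2 sin(νπ) / π`. The
Legendre facts come from the substitution `sin(β / 2) = k sin φ` in the Mehler–Dirichlet integral.
-/

open Set Filter Asymptotics
open scoped Topology

lemma one_sub_sq_pos_of_mem_Ioo {x : ℝ} (hx : x ∈ Ioo (-1 : ℝ) 1) : 0 < 1 - x ^ 2 := by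
  nlinarith [hx.1, hx.2]

lemma one_sub_ofReal_sq_ne_zero {x : ℝ} (hx : x ∈ Ioo (-1 : ℝ) 1) : 1 - (x : ℂ) ^ 2 ≠ 0 := by
  exact_mod_cast (one_sub_sq_pos_of_mem_Ioo hx).ne'

lemma neg_mem_Ioo_neg_one_one {x : ℝ} (hx : x ∈ Ioo (-1 : ℝ) 1) : -x ∈ Ioo (-1 : ℝ) 1 :=
  ⟨by linarith [hx.2], by linarith [hx.1]⟩

/-! ### Legendre's differential equation -/

/-- The quasi-derivative `(1 - x²) f'(x)` attached to the Sturm–Liouville form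
`((1 - x²) f')' + κ f = 0` of Legendre's equation. -/
noncomputable def quasiDeriv (f : ℝ → ℂ) (x : ℝ) : ℂ := (1 - (x : ℂ) ^ 2) * deriv f x

/-- `f` solves Legendre's equation `((1 - x²) f')' + κ f = 0` on `(-1, 1)`. -/
structure IsLegendreSolution (κ : ℂ) (f : ℝ → ℂ) : Prop where
  differentiableAt {x : ℝ} (hx : x ∈ Ioo (-1 : ℝ) 1) : DifferentiableAt ℝ f x
  hasDerivAt_quasiDeriv {x : ℝ} (hx : x ∈ Ioo (-1 : ℝ) 1) :
    HasDerivAt (quasiDeriv f) (-κ * f x) x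

/-- Lagrange's bilinear concomitant of `g` and the product `u * v` for Appell's third-order
operator, which annihilates the products of two solutions of Legendre's equation with
parameter `l`. Here `g` is meant to solve Legendre's equation with parameter `κ`, and the second
derivatives have been eliminated by means of the equations. -/
noncomputable def legendreConcomitant (κ l : ℂ) (g u v : ℝ → ℂ) (x : ℝ) : ℂ :=
  (2 * l - κ) * (1 - (x : ℂ) ^ 2) * g x * u x * v x
    - quasiDeriv g x * (quasiDeriv u x * v x + u x * quasiDeriv v x)
    + 2 * g x * quasiDeriv u x * quasiDeriv v x

lemma quasiDeriv_comp_neg (f : ℝ → ℂ) (x : ℝ) :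
    quasiDeriv (fun y => f (-y)) x = -quasiDeriv f (-x) := by
  simp [quasiDeriv, deriv_comp_neg]

namespace IsLegendreSolution

variable {κ l : ℂ} {f g u v : ℝ → ℂ} {x : ℝ}

lemma hasDerivAt (hf : IsLegendreSolution κ f) (hx : x ∈ Ioo (-1 : ℝ) 1) :
    HasDerivAt f (quasiDeriv f x / (1 - (x : ℂ) ^ 2)) x := by
  rw [quasiDeriv, mul_div_cancel_left₀ _ (one_sub_ofReal_sq_ne_zero hx)]
  exact (hf.differentiableAt hx).hasDerivAt

lemma comp_neg (hf : IsLegendreSolution κ f) : IsLegendreSolution κ fun x => f (-x) where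
  differentiableAt hx :=
    (hf.differentiableAt (neg_mem_Ioo_neg_one_one hx)).comp _ differentiable_neg.differentiableAt
  hasDerivAt_quasiDeriv {x} hx := by
    rw [funext (quasiDeriv_comp_neg f)]
    refine ((hf.hasDerivAt_quasiDeriv
      (neg_mem_Ioo_neg_one_one hx)).scomp x (hasDerivAt_neg x)).neg.congr_deriv ?_
    simp

lemma hasDerivAt_concomitant (hg : IsLegendreSolution κ g) (hu : IsLegendreSolution l u)
    (hv : IsLegendreSolution l v) (hx : x ∈ Ioo (-1 : ℝ) 1) :
    HasDerivAt (legendreConcomitant κ l g u v)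
      (((4 * l - κ) * quasiDeriv g x - 2 * (2 * l - κ) * x * g x) * (u x * v x)) x := by
  have hne := one_sub_ofReal_sq_ne_zero hx
  have hp : HasDerivAt (fun x : ℝ => (2 * l - κ) * (1 - (x : ℂ) ^ 2))
      ((2 * l - κ) * -(2 * x)) x := by
    simpa using (((hasDerivAt_id x).ofReal_comp.pow 2).const_sub 1).const_mul (2 * l - κ)
  have hg₁ := hg.hasDerivAt hx
  have hu₁ := hu.hasDerivAt hx
  have hv₁ := hv.hasDerivAt hx
  have hg₂ := hg.hasDerivAt_quasiDeriv hx
  have hu₂ := hu.hasDerivAt_quasiDeriv hx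
  have hv₂ := hv.hasDerivAt_quasiDeriv hx
  have hB := (((hp.mul hg₁).mul hu₁).mul hv₁).sub (hg₂.mul ((hu₂.mul hv₁).add (hu₁.mul hv₂)))
    |>.add (((hg₁.const_mul 2).mul hu₂).mul hv₂)
  refine hB.congr_deriv ?_
  simp only [Pi.mul_apply, Pi.add_apply]
  field_simp
  ring

end IsLegendreSolution

/-! ### The Mehler–Dirichlet integral in the variable `k = sin (θ / 2)` -/

/-- The integrand of the Mehler–Dirichlet integral after the substitution
`sin (β / 2) = t = k sin φ`, where `k = sin (θ / 2)`. -/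
noncomputable def mehlerKernel (ν : ℂ) (t : ℝ) : ℂ :=
  Complex.cos ((2 * ν + 1) * (arcsin t : ℝ)) / (√(1 - t ^ 2) : ℝ)

/-- The function `k ↦ P_ν(1 - 2k²)`, that is, `P_ν(cos θ)` in terms of `k = sin (θ / 2)`.
It is smooth on `(-1, 1)`, including the point `k = 0` corresponding to the endpoint `cos θ = 1`. -/
noncomputable def legendreSinHalf (ν : ℂ) (k : ℝ) : ℂ :=
  (2 / π : ℝ) * ∫ φ in (0 : ℝ)..(π / 2), mehlerKernel ν (k * sin φ)

lemma mul_sin_mem_Ioo {k : ℝ} (hk : k ∈ Ioo (-1 : ℝ) 1) (φ : ℝ) : k * sin φ ∈ Ioo (-1 : ℝ) 1 := by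
  rw [mem_Ioo, ← abs_lt] at hk ⊢
  rw [abs_mul]
  exact (mul_le_of_le_one_right (abs_nonneg k) (abs_sin_le_one φ)).trans_lt hk

lemma hasDerivAt_mul_sin (k φ : ℝ) : HasDerivAt (fun φ => k * sin φ) (k * cos φ) φ :=
  (hasDerivAt_sin φ).const_mul k

lemma ofReal_sqrt_one_sub_sq_sq {t : ℝ} (ht : t ∈ Ioo (-1 : ℝ) 1) :
    ((√(1 - t ^ 2) : ℝ) : ℂ) ^ 2 = 1 - (t : ℂ) ^ 2 := by
  exact_mod_cast congrArg ((↑) : ℝ → ℂ) (sq_sqrt (one_sub_sq_pos_of_mem_Ioo ht).le)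

lemma ofReal_sqrt_one_sub_sq_ne_zero {t : ℝ} (ht : t ∈ Ioo (-1 : ℝ) 1) :
    ((√(1 - t ^ 2) : ℝ) : ℂ) ≠ 0 := by
  exact_mod_cast (sqrt_pos.2 (one_sub_sq_pos_of_mem_Ioo ht)).ne'

lemma hasDerivAt_sin_mul_arcsin (a : ℂ) {t : ℝ} (ht : t ∈ Ioo (-1 : ℝ) 1) :
    HasDerivAt (fun t : ℝ => Complex.sin (a * (arcsin t : ℝ)))
      (a * Complex.cos (a * (arcsin t : ℝ)) / (√(1 - t ^ 2) : ℝ)) t := by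
  have harcsin := (hasDerivAt_arcsin ht.1.ne' ht.2.ne).ofReal_comp.const_mul a
  refine ((Complex.hasDerivAt_sin _).scomp t harcsin).congr_deriv ?_
  simp only [smul_eq_mul]
  push_cast
  ring

lemma hasDerivAt_cos_mul_arcsin (a : ℂ) {t : ℝ} (ht : t ∈ Ioo (-1 : ℝ) 1) :
    HasDerivAt (fun t : ℝ => Complex.cos (a * (arcsin t : ℝ)))
      (-(a * Complex.sin (a * (arcsin t : ℝ))) / (√(1 - t ^ 2) : ℝ)) t := by
  have harcsin := (hasDerivAt_arcsin ht.1.ne' ht.2.ne).ofReal_comp.const_mul a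
  refine ((Complex.hasDerivAt_cos _).scomp t harcsin).congr_deriv ?_
  simp only [smul_eq_mul]
  push_cast
  ring

lemma contDiffOn_mehlerKernel (ν : ℂ) : ContDiffOn ℝ 1 (mehlerKernel ν) (Ioo (-1) 1) := by
  intro t ht
  have harcsin : ContDiffAt ℝ 1 arcsin t := contDiffAt_arcsin ht.1.ne' ht.2.ne
  have hsqrt : ContDiffAt ℝ 1 (fun t : ℝ => √(1 - t ^ 2)) t :=
    (by fun_prop : ContDiffAt ℝ 1 (fun t : ℝ => 1 - t ^ 2) t).sqrt
      (one_sub_sq_pos_of_mem_Ioo ht).ne'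
  have hcos : ContDiffAt ℝ 1 (fun t : ℝ => Complex.cos ((2 * ν + 1) * (arcsin t : ℝ))) t :=
    (Complex.contDiff_cos.restrict_scalars ℝ).contDiffAt.comp t
      (contDiffAt_const.mul (Complex.ofRealCLM.contDiff.contDiffAt.comp t harcsin))
  exact (hcos.mul ((Complex.ofRealCLM.contDiff.contDiffAt.comp t hsqrt).inv
    (ofReal_sqrt_one_sub_sq_ne_zero ht))).contDiffWithinAt

lemma hasDerivAt_mehlerKernel (ν : ℂ) {t : ℝ} (ht : t ∈ Ioo (-1 : ℝ) 1) :
    HasDerivAt (mehlerKernel ν) (deriv (mehlerKernel ν) t) t :=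
  (((contDiffOn_mehlerKernel ν).contDiffAt (Ioo_mem_nhds ht.1 ht.2)).differentiableAt
    one_ne_zero).hasDerivAt

lemma continuous_mehlerKernel_mul_sin (ν : ℂ) {k : ℝ} (hk : k ∈ Ioo (-1 : ℝ) 1) :
    Continuous fun φ => mehlerKernel ν (k * sin φ) :=
  (contDiffOn_mehlerKernel ν).continuousOn.comp_continuous (by fun_prop) (mul_sin_mem_Ioo hk)

lemma continuous_deriv_mehlerKernel_mul_sin (ν : ℂ) {k : ℝ} (hk : k ∈ Ioo (-1 : ℝ) 1) :
    Continuous fun φ => deriv (mehlerKernel ν) (k * sin φ) :=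
  ((contDiffOn_mehlerKernel ν).continuousOn_deriv_of_isOpen isOpen_Ioo le_rfl).comp_continuous
    (by fun_prop) (mul_sin_mem_Ioo hk)

lemma one_sub_sq_mul_deriv_mehlerKernel (ν : ℂ) {t : ℝ} (ht : t ∈ Ioo (-1 : ℝ) 1) :
    (1 - (t : ℂ) ^ 2) * deriv (mehlerKernel ν) t =
      t * mehlerKernel ν t - (2 * ν + 1) * Complex.sin ((2 * ν + 1) * (arcsin t : ℝ)) := by
  have hpos := one_sub_sq_pos_of_mem_Ioo ht
  have hne := ofReal_sqrt_one_sub_sq_ne_zero ht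
  have hsqrt : HasDerivAt (fun t : ℝ => √(1 - t ^ 2)) (-t / √(1 - t ^ 2)) t := by
    refine (((hasDerivAt_pow 2 t).const_sub 1).sqrt hpos.ne').congr_deriv ?_
    have := (sqrt_pos.2 hpos).ne'
    field_simp
    simp
  have hquot : HasDerivAt (mehlerKernel ν) _ t :=
    (hasDerivAt_cos_mul_arcsin (2 * ν + 1) ht).div hsqrt.ofReal_comp hne
  rw [hquot.deriv, ← ofReal_sqrt_one_sub_sq_sq ht, mehlerKernel]
  push_cast
  field_simp
  ring

lemma mehlerKernel_sub_one (ν : ℂ) {t : ℝ} (ht : t ∈ Ioo (-1 : ℝ) 1) :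
    mehlerKernel (ν - 1) t = (1 - 2 * (t : ℂ) ^ 2) * mehlerKernel ν t
      + 2 * t * Complex.sin ((2 * ν + 1) * (arcsin t : ℝ)) := by
  have hne := ofReal_sqrt_one_sub_sq_ne_zero ht
  have hsin : Complex.sin (arcsin t : ℝ) = t := by
    rw [← Complex.ofReal_sin, sin_arcsin ht.1.le ht.2.le]
  have hcos : Complex.cos (arcsin t : ℝ) = (√(1 - t ^ 2) : ℝ) := by
    rw [← Complex.ofReal_cos, cos_arcsin]
  have harg : (2 * (ν - 1) + 1) * ((arcsin t : ℝ) : ℂ) =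
      (2 * ν + 1) * (arcsin t : ℝ) - 2 * (arcsin t : ℝ) := by ring
  rw [mehlerKernel, mehlerKernel, harg, Complex.cos_sub, Complex.cos_two_mul, Complex.sin_two_mul,
    hsin, hcos, ofReal_sqrt_one_sub_sq_sq ht]
  field_simp
  ring

lemma mehlerKernel_sub_one_add (ν : ℂ) {t : ℝ} (ht : t ∈ Ioo (-1 : ℝ) 1) :
    mehlerKernel (ν - 1) t + mehlerKernel ν t = 2 * Complex.cos (2 * ν * (arcsin t : ℝ)) := by
  have hne := ofReal_sqrt_one_sub_sq_ne_zero ht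
  have hcos : Complex.cos (arcsin t : ℝ) = (√(1 - t ^ 2) : ℝ) := by
    rw [← Complex.ofReal_cos, cos_arcsin]
  have harg₁ : (2 * (ν - 1) + 1) * ((arcsin t : ℝ) : ℂ) =
      2 * ν * (arcsin t : ℝ) - (arcsin t : ℝ) := by ring
  have harg₂ : (2 * ν + 1) * ((arcsin t : ℝ) : ℂ) =
      2 * ν * (arcsin t : ℝ) + (arcsin t : ℝ) := by ring
  rw [mehlerKernel, mehlerKernel, harg₁, harg₂, Complex.cos_sub, Complex.cos_add, hcos]
  field_simp
  ring

lemma hasDerivAt_integral_comp_mul_sin {E : Type*} [NormedAddCommGroup E] [NormedSpace ℝ E]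
    {f : ℝ → E} (hf : ContDiffOn ℝ 1 f (Ioo (-1) 1)) (a b : ℝ) {k : ℝ}
    (hk : k ∈ Ioo (-1 : ℝ) 1) :
    HasDerivAt (fun k => ∫ φ in a..b, f (k * sin φ))
      (∫ φ in a..b, sin φ • deriv f (k * sin φ)) k := by
  have hf' : ContinuousOn (deriv f) (Ioo (-1) 1) :=
    hf.continuousOn_deriv_of_isOpen isOpen_Ioo le_rfl
  have hcont {k : ℝ} (hk : k ∈ Ioo (-1 : ℝ) 1) : Continuous fun φ => f (k * sin φ) :=
    hf.continuousOn.comp_continuous (by fun_prop) (mul_sin_mem_Ioo hk)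
  have hcont' : Continuous fun φ => deriv f (k * sin φ) :=
    hf'.comp_continuous (by fun_prop) (mul_sin_mem_Ioo hk)
  obtain ⟨r, hkr, hr⟩ := exists_between (abs_lt.2 hk)
  have hsub : Icc (-r) r ⊆ Ioo (-1 : ℝ) 1 := Icc_subset_Ioo (by linarith) hr
  obtain ⟨C, hC⟩ := isCompact_Icc.exists_bound_of_continuousOn (hf'.mono hsub)
  have hnhds : Ioo (-r) r ∈ 𝓝 k := Ioo_mem_nhds (abs_lt.1 hkr).1 (abs_lt.1 hkr).2
  have hmem {x : ℝ} (hx : x ∈ Ioo (-r) r) (φ : ℝ) : x * sin φ ∈ Icc (-r) r := by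
    rw [mem_Icc, ← abs_le, abs_mul]
    exact (mul_le_of_le_one_right (abs_nonneg x) (abs_sin_le_one φ)).trans (abs_lt.2 hx).le
  refine (hasDerivAt_integral_of_dominated_loc_of_deriv_le (bound := fun _ => C)
    (F' := fun k φ => sin φ • deriv f (k * sin φ)) hnhds ?_ ((hcont hk).intervalIntegrable a b)
    (by fun_prop : Continuous _).aestronglyMeasurable ?_ intervalIntegrable_const ?_).2
  · filter_upwards [hnhds] with x hx
    exact (hcont (hsub (Ioo_subset_Icc_self hx))).aestronglyMeasurable
  · refine Eventually.of_forall fun φ _ x hx => ?_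
    rw [norm_smul]
    exact (mul_le_of_le_one_left (norm_nonneg _) (abs_sin_le_one φ)).trans (hC _ (hmem hx φ))
  · refine Eventually.of_forall fun φ _ x hx => ?_
    have hfx := (hf.contDiffAt (isOpen_Ioo.mem_nhds (hsub (hmem hx φ)))).differentiableAt
      one_ne_zero |>.hasDerivAt
    exact hfx.scomp x (hasDerivAt_mul_const (sin φ))

lemma hasDerivAt_legendreSinHalf (ν : ℂ) {k : ℝ} (hk : k ∈ Ioo (-1 : ℝ) 1) :
    HasDerivAt (legendreSinHalf ν)
      ((2 / π : ℝ) * ∫ φ in (0 : ℝ)..(π / 2), sin φ * deriv (mehlerKernel ν) (k * sin φ)) k :=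
  (hasDerivAt_integral_comp_mul_sin (contDiffOn_mehlerKernel ν) 0 (π / 2) hk).const_mul _

lemma legendreSinHalf_zero (ν : ℂ) : legendreSinHalf ν 0 = 1 := by
  have : (π : ℂ) ≠ 0 := Complex.ofReal_ne_zero.2 pi_ne_zero
  simp [legendreSinHalf, mehlerKernel, field]

-- The primitive vanishes at both ends of `[0, π / 2]`, which gives the ladder relation.
lemma hasDerivAt_ladder_primitive (ν : ℂ) {k : ℝ} (hk : k ∈ Ioo (-1 : ℝ) 1) (φ : ℝ) :
    HasDerivAt
      (fun φ : ℝ => k * (cos φ : ℂ) * ((k * sin φ : ℝ) * mehlerKernel ν (k * sin φ)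
        - Complex.sin ((2 * ν + 1) * (arcsin (k * sin φ) : ℝ))))
      (-(k * (1 - (k : ℂ) ^ 2)) * (sin φ * deriv (mehlerKernel ν) (k * sin φ))
        - ν * (mehlerKernel (ν - 1) (k * sin φ)
          - (1 - 2 * (k : ℂ) ^ 2) * mehlerKernel ν (k * sin φ))) φ := by
  have hmem := mul_sin_mem_Ioo hk φ
  have harg := hasDerivAt_mul_sin k φ
  have hF := (hasDerivAt_mehlerKernel ν hmem).scomp φ harg
  have hS := (hasDerivAt_sin_mul_arcsin (2 * ν + 1) hmem).scomp φ harg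
  have hcos := (hasDerivAt_cos φ).ofReal_comp.const_mul (k : ℂ)
  refine (hcos.mul ((harg.ofReal_comp.mul hF).sub hS)).congr_deriv ?_
  have hF' := one_sub_sq_mul_deriv_mehlerKernel ν hmem
  have hcs : (cos φ : ℂ) ^ 2 = 1 - (sin φ : ℂ) ^ 2 := by exact_mod_cast cos_sq' φ
  rw [mehlerKernel_sub_one ν hmem, mul_div_assoc, ← mehlerKernel]
  simp only [Function.comp_apply, Complex.real_smul, Complex.ofReal_mul, Complex.ofReal_neg,
    Pi.mul_apply, Pi.sub_apply] at hF' ⊢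
  linear_combination (k : ℂ) ^ 2 * (k * sin φ * deriv (mehlerKernel ν) (k * sin φ)
    - 2 * ν * mehlerKernel ν (k * sin φ)) * hcs + (k : ℂ) * sin φ * hF'

lemma legendreSinHalf_ladder (ν : ℂ) {k : ℝ} (hk : k ∈ Ioo (-1 : ℝ) 1) :
    -(k * (1 - (k : ℂ) ^ 2)) * deriv (legendreSinHalf ν) k =
      ν * (legendreSinHalf (ν - 1) k - (1 - 2 * (k : ℂ) ^ 2) * legendreSinHalf ν k) := by
  have hF := continuous_mehlerKernel_mul_sin ν hk
  have hG := continuous_mehlerKernel_mul_sin (ν - 1) hk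
  have hF' := continuous_deriv_mehlerKernel_mul_sin ν hk
  have hint := integral_eq_sub_of_hasDerivAt (a := 0) (b := π / 2)
    (fun φ _ => hasDerivAt_ladder_primitive ν hk φ)
    (Continuous.intervalIntegrable (by fun_prop) _ _)
  simp only [cos_pi_div_two, sin_zero, mul_zero, arcsin_zero, Complex.ofReal_zero, zero_mul,
    Complex.sin_zero, sub_self] at hint
  rw [integral_sub (Continuous.intervalIntegrable (by fun_prop) _ _)
      (Continuous.intervalIntegrable (by fun_prop) _ _),
    intervalIntegral.integral_const_mul, intervalIntegral.integral_const_mul,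
    integral_sub (hG.intervalIntegrable _ _) ((hF.const_mul _).intervalIntegrable _ _),
    intervalIntegral.integral_const_mul] at hint
  rw [(hasDerivAt_legendreSinHalf ν hk).deriv, legendreSinHalf, legendreSinHalf]
  linear_combination ((2 / π : ℝ) : ℂ) * hint

lemma cos_two_mul_arcsin {t : ℝ} (ht : t ∈ Icc (-1 : ℝ) 1) :
    cos (2 * arcsin t) = 1 - 2 * t ^ 2 := by
  rw [cos_two_mul', cos_sq', sin_arcsin ht.1 ht.2]
  ring

lemma arccos_one_sub_two_mul_sq {k : ℝ} (hk : k ∈ Icc (0 : ℝ) 1) :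
    arccos (1 - 2 * k ^ 2) = 2 * arcsin k := by
  rw [← cos_two_mul_arcsin ⟨by linarith [hk.1], hk.2⟩]
  refine arccos_cos ?_ ?_
  · linarith [arcsin_nonneg.2 hk.1]
  · linarith [arcsin_le_pi_div_two k]

lemma hasDerivAt_two_mul_arcsin_mul_sin {k : ℝ} (hk : k ∈ Ioo (-1 : ℝ) 1) (φ : ℝ) :
    HasDerivAt (fun φ => 2 * arcsin (k * sin φ))
      (2 * (k * cos φ) / √(1 - (k * sin φ) ^ 2)) φ := by
  have hmem := mul_sin_mem_Ioo hk φ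
  refine (((hasDerivAt_arcsin hmem.1.ne' hmem.2.ne).comp φ
    (hasDerivAt_mul_sin k φ)).const_mul 2).congr_deriv ?_
  ring

lemma sqrt_cos_two_mul_arcsin_mul_sin_sub {k φ : ℝ} (hk : k ∈ Ico (0 : ℝ) 1) (hφ : 0 ≤ cos φ) :
    √(2 * (cos (2 * arcsin (k * sin φ)) - (1 - 2 * k ^ 2))) = 2 * (k * cos φ) := by
  have hmem := mul_sin_mem_Ioo ⟨by linarith [hk.1], hk.2⟩ φ
  have hsq : 2 * (cos (2 * arcsin (k * sin φ)) - (1 - 2 * k ^ 2)) = (2 * (k * cos φ)) ^ 2 := by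
    rw [cos_two_mul_arcsin (Ioo_subset_Icc_self hmem)]
    linear_combination -4 * k ^ 2 * cos_sq' φ
  rw [hsq, sqrt_sq (mul_nonneg zero_le_two (mul_nonneg hk.1 hφ))]

-- The substitution `β = 2 arcsin (k sin φ)` removes the square-root singularity at `β = θ`.
lemma legendreP_one_sub_two_mul_sq (ν : ℂ) {k : ℝ} (hk : k ∈ Ico (0 : ℝ) 1) :
    legendreP ν (1 - 2 * k ^ 2) = legendreSinHalf ν k := by
  rcases hk.1.eq_or_lt with rfl | hk0
  · simp [legendreP, legendreSinHalf_zero]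
  have hk' : k ∈ Ioo (-1 : ℝ) 1 := ⟨by linarith, hk.2⟩
  have hcos {φ : ℝ} (hφ : φ ∈ Ioo 0 (π / 2)) : 0 < cos φ :=
    cos_pos_of_mem_Ioo ⟨by linarith [hφ.1, pi_pos], hφ.2⟩
  have hIoo : Ioo (min 0 (π / 2)) (max 0 (π / 2)) = Ioo 0 (π / 2) := by
    rw [min_eq_left pi_div_two_pos.le, max_eq_right pi_div_two_pos.le]
  have hsubst := integral_deriv_smul_comp_of_deriv_nonneg (a := 0) (b := π / 2)
    (f := fun φ => 2 * arcsin (k * sin φ))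
    (g := fun β : ℝ => Complex.cos ((2 * ν + 1) * β / 2) /
      ((√(2 * (cos β - (1 - 2 * k ^ 2))) : ℝ) : ℂ))
    (fun φ _ => (hasDerivAt_two_mul_arcsin_mul_sin hk' φ).continuousAt.continuousWithinAt)
    (fun φ _ => hasDerivAt_two_mul_arcsin_mul_sin hk' φ)
    (fun φ hφ => by have := hcos (hIoo ▸ hφ); positivity)
  simp only [sin_zero, mul_zero, arcsin_zero, sin_pi_div_two, mul_one] at hsubst
  rw [legendreP, if_neg (by nlinarith), arccos_one_sub_two_mul_sq (Ico_subset_Icc_self hk),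
    ← hsubst, legendreSinHalf]
  congr 1
  refine integral_congr_Ioo_of_le pi_div_two_pos.le fun φ hφ => ?_
  have hk_ne : (k : ℂ) ≠ 0 := Complex.ofReal_ne_zero.2 hk0.ne'
  have hcos_ne : Complex.cos φ ≠ 0 := by exact_mod_cast (hcos hφ).ne'
  rw [Function.comp_apply, sqrt_cos_two_mul_arcsin_mul_sin_sub hk (hcos hφ).le, mehlerKernel,
    Complex.real_smul]
  push_cast
  field_simp

/-! ### Ladder relations -/

lemma sqrt_half_one_sub_mem_Ioo {x : ℝ} (hx : x ∈ Ioo (-1 : ℝ) 1) :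
    √((1 - x) / 2) ∈ Ioo (0 : ℝ) 1 :=
  ⟨sqrt_pos.2 (by linarith [hx.2]), (sqrt_lt' one_pos).2 (by linarith [hx.1])⟩

lemma one_sub_two_mul_sqrt_half_one_sub_sq {x : ℝ} (hx : x ≤ 1) :
    1 - 2 * √((1 - x) / 2) ^ 2 = x := by
  rw [sq_sqrt (by linarith)]
  ring

lemma legendreP_eq_legendreSinHalf (ν : ℂ) {x : ℝ} (hx : x ∈ Ioo (-1 : ℝ) 1) :
    legendreP ν x = legendreSinHalf ν √((1 - x) / 2) := by
  rw [← legendreP_one_sub_two_mul_sq ν (Ioo_subset_Ico_self (sqrt_half_one_sub_mem_Ioo hx)),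
    one_sub_two_mul_sqrt_half_one_sub_sq hx.2.le]

lemma legendreP_neg_one_sub (ν : ℂ) : legendreP (-1 - ν) = legendreP ν := by
  ext x
  have hcos (β : ℝ) : Complex.cos ((2 * (-1 - ν) + 1) * β / 2) =
      Complex.cos ((2 * ν + 1) * β / 2) := by
    rw [← Complex.cos_neg]
    congr 1
    ring
  simp only [legendreP, hcos]

lemma hasDerivAt_sqrt_half_one_sub {x : ℝ} (hx : x < 1) :
    HasDerivAt (fun x => √((1 - x) / 2)) (-1 / (4 * √((1 - x) / 2))) x := by
  refine ((((hasDerivAt_id x).const_sub 1).div_const 2).sqrt (by simp; linarith)).congr_deriv ?_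
  simp only [id_eq]
  ring

lemma hasDerivAt_legendreP (ν : ℂ) {x : ℝ} (hx : x ∈ Ioo (-1 : ℝ) 1) :
    HasDerivAt (legendreP ν)
      (ν * (legendreP (ν - 1) x - x * legendreP ν x) / (1 - (x : ℂ) ^ 2)) x := by
  have hmem := sqrt_half_one_sub_mem_Ioo hx
  have hmem' := Ioo_subset_Ioo_left (by norm_num : (-1 : ℝ) ≤ 0) hmem
  have heq : legendreP ν =ᶠ[𝓝 x] legendreSinHalf ν ∘ fun x => √((1 - x) / 2) := by
    filter_upwards [Ioo_mem_nhds hx.1 hx.2] with y hy using legendreP_eq_legendreSinHalf ν hy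
  have hcomp := (hasDerivAt_legendreSinHalf ν hmem').differentiableAt.hasDerivAt.scomp x
    (hasDerivAt_sqrt_half_one_sub hx.2)
  refine (hcomp.congr_of_eventuallyEq heq).congr_deriv ?_
  rw [legendreP_eq_legendreSinHalf _ hx, legendreP_eq_legendreSinHalf _ hx]
  have hladder := legendreSinHalf_ladder ν hmem'
  have hxk := one_sub_two_mul_sqrt_half_one_sub_sq hx.2.le
  generalize √((1 - x) / 2) = k at *
  subst hxk
  have hk : (k : ℂ) ≠ 0 := Complex.ofReal_ne_zero.2 hmem.1.ne'
  have hk' := one_sub_ofReal_sq_ne_zero hmem'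
  have hfactor : 1 - ((1 - 2 * k ^ 2 : ℝ) : ℂ) ^ 2 = 4 * k ^ 2 * (1 - (k : ℂ) ^ 2) := by
    push_cast
    ring
  rw [hfactor, eq_div_iff (mul_ne_zero (mul_ne_zero (by norm_num) (pow_ne_zero 2 hk)) hk'),
    Complex.real_smul]
  push_cast
  rw [← hladder]
  field_simp

lemma quasiDeriv_legendreP (ν : ℂ) {x : ℝ} (hx : x ∈ Ioo (-1 : ℝ) 1) :
    quasiDeriv (legendreP ν) x = ν * (legendreP (ν - 1) x - x * legendreP ν x) := by
  rw [quasiDeriv, (hasDerivAt_legendreP ν hx).deriv,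
    mul_div_cancel₀ _ (one_sub_ofReal_sq_ne_zero hx)]

lemma quasiDeriv_legendreP' (ν : ℂ) {x : ℝ} (hx : x ∈ Ioo (-1 : ℝ) 1) :
    quasiDeriv (legendreP ν) x = (ν + 1) * (x * legendreP ν x - legendreP (ν + 1) x) := by
  have h := quasiDeriv_legendreP (-1 - ν) hx
  rw [show -1 - ν - 1 = -1 - (ν + 1) by ring, legendreP_neg_one_sub, legendreP_neg_one_sub] at h
  rw [h]
  ring

lemma isLegendreSolution_legendreP (ν : ℂ) :
    IsLegendreSolution (ν * (ν + 1)) (legendreP ν) where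
  differentiableAt hx := (hasDerivAt_legendreP ν hx).differentiableAt
  hasDerivAt_quasiDeriv {x} hx := by
    have heq : quasiDeriv (legendreP ν) =ᶠ[𝓝 x]
        fun x => ν * (legendreP (ν - 1) x - x * legendreP ν x) := by
      filter_upwards [Ioo_mem_nhds hx.1 hx.2] with y hy using quasiDeriv_legendreP ν hy
    have hladder := ((hasDerivAt_legendreP (ν - 1) hx).sub
      ((hasDerivAt_id x).ofReal_comp.mul (hasDerivAt_legendreP ν hx))).const_mul ν
    refine (hladder.congr_of_eventuallyEq heq).congr_deriv ?_
    have hup := quasiDeriv_legendreP' (ν - 1) hx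
    rw [quasiDeriv_legendreP (ν - 1) hx, sub_add_cancel] at hup
    have hne := one_sub_ofReal_sq_ne_zero hx
    rw [hup]
    simp only [id_eq, Complex.ofReal_one]
    field_simp
    ring

lemma legendreP_contiguity (μ ν : ℂ) {x : ℝ} (hx : x ∈ Ioo (-1 : ℝ) 1) :
    (2 * μ + 1) * ((4 * (ν * (ν + 1)) - μ * (μ + 1)) * quasiDeriv (legendreP μ) x
        - 2 * (2 * (ν * (ν + 1)) - μ * (μ + 1)) * x * legendreP μ x) =
      (μ + 1) ^ 2 * ((μ + 1) ^ 2 - (2 * ν + 1) ^ 2) * legendreP (μ + 1) x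
        - μ ^ 2 * (μ ^ 2 - (2 * ν + 1) ^ 2) * legendreP (μ - 1) x := by
  linear_combination -μ * (μ ^ 2 - (2 * ν + 1) ^ 2) * quasiDeriv_legendreP μ hx
    - (μ + 1) * ((μ + 1) ^ 2 - (2 * ν + 1) ^ 2) * quasiDeriv_legendreP' μ hx

/-- Up to the factor `2 * μ + 1`, the bilinear concomitant of `P_μ` and `P_ν(x) P_ν(-x)`. Its
derivative is the combination of integrands that occurs in the recursion. -/
noncomputable def clebschGordanPrimitive (μ ν : ℂ) (x : ℝ) : ℂ :=
  (2 * μ + 1) * legendreConcomitant (μ * (μ + 1)) (ν * (ν + 1))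
    (legendreP μ) (legendreP ν) (fun x => legendreP ν (-x)) x

lemma hasDerivAt_clebschGordanPrimitive (μ ν : ℂ) {x : ℝ} (hx : x ∈ Ioo (-1 : ℝ) 1) :
    HasDerivAt (clebschGordanPrimitive μ ν)
      ((μ + 1) ^ 2 * ((μ + 1) ^ 2 - (2 * ν + 1) ^ 2)
          * (legendreP (μ + 1) x * legendreP ν x * legendreP ν (-x))
        - μ ^ 2 * (μ ^ 2 - (2 * ν + 1) ^ 2)
          * (legendreP (μ - 1) x * legendreP ν x * legendreP ν (-x))) x := by
  have hν := isLegendreSolution_legendreP ν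
  refine (((isLegendreSolution_legendreP μ).hasDerivAt_concomitant hν hν.comp_neg
    hx).const_mul (2 * μ + 1)).congr_deriv ?_
  linear_combination legendreP ν x * legendreP ν (-x) * legendreP_contiguity μ ν hx

/-! ### Power bounds at an endpoint -/

section PowerBounds

variable {E : Type*} [NormedAddCommGroup E] {a b p q : ℝ} {f : ℝ → E}

lemma tendsto_zero_of_isBigO_sub_rpow (hp : 0 < p)
    (hf : f =O[𝓝[<] b] fun x => (b - x) ^ p) : Tendsto f (𝓝[<] b) (𝓝 0) := by
  have hcont : Continuous fun x : ℝ => (b - x) ^ p :=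
    Continuous.rpow_const (by fun_prop) fun _ => Or.inr hp.le
  refine hf.trans_tendsto (Tendsto.mono_left ?_ nhdsWithin_le_nhds)
  simpa [zero_rpow hp.ne'] using hcont.tendsto b

lemma isBigO_mul_sub_rpow {R : Type*} [SeminormedRing R] {f g : ℝ → R}
    (hf : f =O[𝓝[<] b] fun x => (b - x) ^ p)
    (hg : g =O[𝓝[<] b] fun x => (b - x) ^ q) :
    (fun x => f x * g x) =O[𝓝[<] b] fun x => (b - x) ^ (p + q) := by
  refine (hf.mul hg).congr' EventuallyEq.rfl ?_
  filter_upwards [self_mem_nhdsWithin] with x hx using (rpow_add (sub_pos.2 hx) p q).symm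

lemma intervalIntegrable_sub_rpow (a b : ℝ) (hp : -1 < p) :
    IntervalIntegrable (fun x => (b - x) ^ p) volume a b := by
  simpa using (intervalIntegrable_rpow' (a := b - a) (b := 0) hp).comp_sub_left b

lemma intervalIntegrable_of_isBigO_sub_rpow (hab : a < b) (hcont : ContinuousOn f (Ico a b))
    (hp : -1 < p) (hf : f =O[𝓝[<] b] fun x => (b - x) ^ p) : IntervalIntegrable f volume a b := by
  have hpow : IntegrableAtFilter (fun x => (b - x) ^ p) (𝓝[<] b) :=
    ⟨Ioo a b, Ioo_mem_nhdsLT hab,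
      (intervalIntegrable_iff_integrableOn_Ioo_of_le hab.le).1 (intervalIntegrable_sub_rpow a b hp)⟩
  have hmeas : StronglyMeasurableAtFilter f (𝓝[<] b) :=
    ⟨Ico a b, Ico_mem_nhdsLT hab, hcont.aestronglyMeasurable measurableSet_Ico⟩
  obtain ⟨s, hs, hfs⟩ := hf.integrableAtFilter hmeas hpow
  obtain ⟨c, hc, hcs⟩ := (mem_nhdsLT_iff_exists_mem_Ico_Ioo_subset hab).1 hs
  have hleft : IntervalIntegrable f volume a c :=
    (hcont.mono (Icc_subset_Ico_right hc.2)).intervalIntegrable_of_Icc hc.1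
  exact hleft.trans
    ((intervalIntegrable_iff_integrableOn_Ioo_of_le hc.2.le).2 (hfs.mono_set hcs))

end PowerBounds

lemma isBigO_one_sub_ofReal_rpow_one :
    (fun y : ℝ => 1 - (y : ℂ)) =O[𝓝[<] 1] fun y => (1 - y) ^ (1 : ℝ) := by
  refine isBigO_of_le _ fun y => ?_
  rw [rpow_one, ← Complex.ofReal_one, ← Complex.ofReal_sub, Complex.norm_real]

lemma intervalIntegrable_cos_rpow {r : ℝ} (hr : -1 < r) :
    IntervalIntegrable (fun φ => cos φ ^ r) volume 0 (π / 2) := by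
  have hcont : ContinuousOn (fun φ => cos φ ^ r) (Ico 0 (π / 2)) :=
    continuous_cos.continuousOn.rpow_const fun φ hφ =>
      Or.inl (cos_pos_of_mem_Ioo ⟨by linarith [hφ.1, pi_pos], hφ.2⟩).ne'
  refine intervalIntegrable_of_isBigO_sub_rpow pi_div_two_pos hcont hr (IsTheta.rpow ?_ ?_ ?_).1
  · filter_upwards [Ioo_mem_nhdsLT pi_div_two_pos] with φ hφ
    exact cos_nonneg_of_mem_Icc ⟨by linarith [hφ.1, pi_pos], hφ.2.le⟩
  · filter_upwards [self_mem_nhdsWithin] with φ hφ using (sub_pos.2 hφ).le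
  · have hsub : Continuous fun φ : ℝ => π / 2 - φ := by fun_prop
    have htend : Tendsto (fun φ => π / 2 - φ) (𝓝[<] (π / 2)) (𝓝 0) := by
      simpa using (hsub.tendsto (π / 2)).mono_left nhdsWithin_le_nhds
    simpa [Function.comp_def, sin_pi_div_two_sub] using
      (isEquivalent_sin.comp_tendsto htend).isTheta

/-! ### Behaviour at the endpoints -/

lemma exists_norm_mehlerKernel_le (ν : ℂ) :
    ∃ C, ∀ t, ‖mehlerKernel ν t‖ ≤ C * (√(1 - t ^ 2))⁻¹ := by
  obtain ⟨C, hC⟩ := (isCompact_Icc (a := -(π / 2)) (b := π / 2)).exists_bound_of_continuousOn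
    (f := fun a : ℝ => Complex.cos ((2 * ν + 1) * a)) (by fun_prop)
  refine ⟨C, fun t => ?_⟩
  rw [mehlerKernel, norm_div, Complex.norm_of_nonneg (sqrt_nonneg _), div_eq_mul_inv]
  gcongr
  exact hC _ (arcsin_mem_Icc t)

lemma inv_sqrt_one_sub_mul_sin_sq_le {k φ : ℝ} (hk : k ∈ Ioo (-1 : ℝ) 1) (hφ : 0 < cos φ) :
    (√(1 - (k * sin φ) ^ 2))⁻¹ ≤ (1 - k ^ 2) ^ (-(1 / 4) : ℝ) * cos φ ^ (-(1 / 2) : ℝ) := by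
  have hk' := one_sub_sq_pos_of_mem_Ioo hk
  have hpos := one_sub_sq_pos_of_mem_Ioo (mul_sin_mem_Ioo hk φ)
  have hle_k : 1 - k ^ 2 ≤ 1 - (k * sin φ) ^ 2 := by
    rw [mul_pow, sin_sq]
    nlinarith [mul_nonneg (sq_nonneg k) (sq_nonneg (cos φ))]
  have hle_cos : cos φ ^ 2 ≤ 1 - (k * sin φ) ^ 2 := by
    rw [mul_pow, cos_sq']
    nlinarith [mul_nonneg hk'.le (sq_nonneg (sin φ))]
  have hsq : (1 - k ^ 2) * cos φ ^ 2 ≤ (1 - (k * sin φ) ^ 2) ^ 2 := by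
    rw [sq (1 - (k * sin φ) ^ 2)]
    exact mul_le_mul hle_k hle_cos (sq_nonneg _) hpos.le
  calc (√(1 - (k * sin φ) ^ 2))⁻¹ = ((1 - (k * sin φ) ^ 2) ^ 2) ^ (-(1 / 4) : ℝ) := by
        rw [← rpow_natCast_mul hpos.le, sqrt_eq_rpow, ← rpow_neg hpos.le]
        norm_num
    _ ≤ ((1 - k ^ 2) * cos φ ^ 2) ^ (-(1 / 4) : ℝ) :=
        rpow_le_rpow_of_nonpos (by positivity) hsq (by norm_num)
    _ = (1 - k ^ 2) ^ (-(1 / 4) : ℝ) * cos φ ^ (-(1 / 2) : ℝ) := by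
        rw [mul_rpow hk'.le (sq_nonneg _), ← rpow_natCast_mul hφ.le]
        norm_num

lemma exists_norm_legendreSinHalf_le (ν : ℂ) :
    ∃ C, ∀ k ∈ Ioo (-1 : ℝ) 1, ‖legendreSinHalf ν k‖ ≤ C * (1 - k ^ 2) ^ (-(1 / 4) : ℝ) := by
  obtain ⟨C, hC⟩ := exists_norm_mehlerKernel_le ν
  refine ⟨2 / π * (C * ∫ φ in (0 : ℝ)..(π / 2), cos φ ^ (-(1 / 2) : ℝ)), fun k hk => ?_⟩
  have hC₀ : 0 ≤ C := by simpa using (norm_nonneg _).trans (hC 0)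
  have hbound : ∀ᵐ φ, φ ∈ Ioc 0 (π / 2) → ‖mehlerKernel ν (k * sin φ)‖ ≤
      C * (1 - k ^ 2) ^ (-(1 / 4) : ℝ) * cos φ ^ (-(1 / 2) : ℝ) := by
    filter_upwards [volume.ae_ne (π / 2)] with φ hne hφ
    have hcos : 0 < cos φ :=
      cos_pos_of_mem_Ioo ⟨by linarith [hφ.1, pi_pos], lt_of_le_of_ne hφ.2 hne⟩
    rw [mul_assoc]
    exact (hC _).trans (mul_le_mul_of_nonneg_left (inv_sqrt_one_sub_mul_sin_sq_le hk hcos) hC₀)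
  have hint := norm_integral_le_of_norm_le pi_div_two_pos.le hbound
    ((intervalIntegrable_cos_rpow (by norm_num)).const_mul _)
  rw [intervalIntegral.integral_const_mul] at hint
  rw [legendreSinHalf, norm_mul, Complex.norm_of_nonneg (by positivity)]
  calc _ ≤ _ := mul_le_mul_of_nonneg_left hint (by positivity)
    _ = _ := by ring

lemma isBigO_legendreP_neg (ν : ℂ) :
    (fun y => legendreP ν (-y)) =O[𝓝[<] 1] fun y : ℝ => (1 - y) ^ (-(1 / 4) : ℝ) := by
  obtain ⟨C, hC⟩ := exists_norm_legendreSinHalf_le ν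
  refine IsBigO.of_bound (C * (1 / 2) ^ (-(1 / 4) : ℝ)) ?_
  filter_upwards [Ioo_mem_nhdsLT (by norm_num : (-1 : ℝ) < 1)] with y hy
  have hy' := neg_mem_Ioo_neg_one_one hy
  have hk := hC _ (Ioo_subset_Ioo_left (by norm_num) (sqrt_half_one_sub_mem_Ioo hy'))
  have hpos : 0 < 1 - y := sub_pos.2 hy.2
  rw [← legendreP_eq_legendreSinHalf ν hy', sq_sqrt (by linarith [hy'.2]),
    show 1 - (1 - -y) / 2 = 1 / 2 * (1 - y) by ring, mul_rpow (by norm_num) hpos.le,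
    ← mul_assoc] at hk
  rwa [norm_of_nonneg (by positivity)]

lemma tendsto_sqrt_half_one_sub : Tendsto (fun y => √((1 - y) / 2)) (𝓝[<] 1) (𝓝 0) := by
  have hcont : Continuous fun y : ℝ => √((1 - y) / 2) := by fun_prop
  simpa using (hcont.tendsto 1).mono_left nhdsWithin_le_nhds

lemma tendsto_legendreP (ν : ℂ) : Tendsto (legendreP ν) (𝓝[<] 1) (𝓝 1) := by
  have hcont := (hasDerivAt_legendreSinHalf ν (k := 0) (by norm_num)).continuousAt.tendsto
  rw [legendreSinHalf_zero] at hcont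
  refine (hcont.comp tendsto_sqrt_half_one_sub).congr' ?_
  filter_upwards [Ioo_mem_nhdsLT (by norm_num : (-1 : ℝ) < 1)] with y hy
  exact (legendreP_eq_legendreSinHalf ν hy).symm

lemma isBigO_quasiDeriv_legendreP (ν : ℂ) :
    quasiDeriv (legendreP ν) =O[𝓝[<] 1] fun y : ℝ => (1 - y) ^ (1 / 2 : ℝ) := by
  have hJ (ν : ℂ) : DifferentiableAt ℝ (legendreSinHalf ν) 0 :=
    (hasDerivAt_legendreSinHalf ν (by norm_num)).differentiableAt
  have hofReal : DifferentiableAt ℝ (fun k : ℝ => 1 - 2 * (k : ℂ) ^ 2) 0 :=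
    ((Complex.ofRealCLM.differentiableAt.pow 2).const_mul 2).const_sub 1
  have hO := (((hJ (ν - 1)).sub (hofReal.mul (hJ ν))).const_mul ν).isBigO_sub
  have hsqrt : (fun y => √((1 - y) / 2)) =O[𝓝[<] 1] fun y : ℝ => (1 - y) ^ (1 / 2 : ℝ) := by
    refine IsBigO.of_bound 1 ?_
    filter_upwards [self_mem_nhdsWithin] with y hy
    rw [one_mul, ← sqrt_eq_rpow, norm_of_nonneg (sqrt_nonneg _), norm_of_nonneg (sqrt_nonneg _)]
    exact sqrt_le_sqrt (by linarith [mem_Iio.1 hy])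
  simp only [sub_zero] at hO
  refine ((hO.comp_tendsto tendsto_sqrt_half_one_sub).trans hsqrt).congr' ?_ EventuallyEq.rfl
  filter_upwards [Ioo_mem_nhdsLT (by norm_num : (-1 : ℝ) < 1)] with y hy
  have hy' : (y : ℂ) = 1 - 2 * (√((1 - y) / 2) : ℝ) ^ 2 := by
    exact_mod_cast (one_sub_two_mul_sqrt_half_one_sub_sq hy.2.le).symm
  rw [quasiDeriv_legendreP ν hy, legendreP_eq_legendreSinHalf _ hy,
    legendreP_eq_legendreSinHalf _ hy]
  simp only [Function.comp_apply, Pi.sub_apply, Pi.mul_apply, ← hy', legendreSinHalf_zero]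
  simp

lemma legendreSinHalf_sub_one_add (ν : ℂ) {k : ℝ} (hk : k ∈ Ioo (-1 : ℝ) 1) :
    legendreSinHalf (ν - 1) k + legendreSinHalf ν k =
      (2 / π : ℝ) * ∫ φ in (0 : ℝ)..(π / 2),
        2 * Complex.cos (2 * ν * (arcsin (k * sin φ) : ℝ)) := by
  rw [legendreSinHalf, legendreSinHalf, ← mul_add, ← integral_add
    ((continuous_mehlerKernel_mul_sin _ hk).intervalIntegrable _ _)
    ((continuous_mehlerKernel_mul_sin _ hk).intervalIntegrable _ _)]
  simp only [mehlerKernel_sub_one_add ν (mul_sin_mem_Ioo hk _)]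

lemma mul_integral_two_mul_cos_two_mul (ν : ℂ) :
    ν * ((2 / π : ℝ) * ∫ φ in (0 : ℝ)..(π / 2), 2 * Complex.cos (2 * ν * φ)) =
      2 * Complex.sin (ν * π) / π := by
  rcases eq_or_ne ν 0 with rfl | hν
  · simp
  have hπ : (π : ℂ) ≠ 0 := Complex.ofReal_ne_zero.2 pi_ne_zero
  rw [intervalIntegral.integral_const_mul, integral_cos_mul_complex (mul_ne_zero two_ne_zero hν)]
  push_cast
  rw [mul_zero, Complex.sin_zero, show 2 * ν * (π / 2 : ℂ) = ν * π by ring]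
  field_simp
  ring

lemma tendsto_mul_legendreSinHalf_sub_one_add (ν : ℂ) :
    Tendsto (fun k => ν * (legendreSinHalf (ν - 1) k + legendreSinHalf ν k)) (𝓝[<] 1)
      (𝓝 (2 * Complex.sin (ν * π) / π)) := by
  have hcont : Continuous fun k : ℝ => ν * ((2 / π : ℝ) * ∫ φ in (0 : ℝ)..(π / 2),
      2 * Complex.cos (2 * ν * (arcsin (k * sin φ) : ℝ))) := by
    refine continuous_const.mul (continuous_const.mul ?_)
    refine continuous_parametric_intervalIntegral_of_continuous' ?_ _ _
    have := continuous_arcsin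
    unfold Function.uncurry
    fun_prop
  have harcsin : ∫ φ in (0 : ℝ)..(π / 2), 2 * Complex.cos (2 * ν * (arcsin (1 * sin φ) : ℝ)) =
      ∫ φ in (0 : ℝ)..(π / 2), 2 * Complex.cos (2 * ν * φ) := by
    refine integral_congr fun φ hφ => ?_
    rw [uIcc_of_le pi_div_two_pos.le] at hφ
    simp only [one_mul, arcsin_sin (by linarith [hφ.1, pi_pos]) hφ.2]
  rw [← mul_integral_two_mul_cos_two_mul, ← harcsin]
  refine ((hcont.tendsto 1).mono_left nhdsWithin_le_nhds).congr' ?_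
  filter_upwards [Ioo_mem_nhdsLT (by norm_num : (-1 : ℝ) < 1)] with k hk
  rw [legendreSinHalf_sub_one_add ν hk]

lemma tendsto_quasiDeriv_legendreP (ν : ℂ) :
    Tendsto (quasiDeriv (legendreP ν)) (𝓝[<] 1) (𝓝 0) :=
  tendsto_zero_of_isBigO_sub_rpow (by norm_num) (isBigO_quasiDeriv_legendreP ν)

lemma tendsto_legendreP_neg_mul_quasiDeriv (μ ν : ℂ) :
    Tendsto (fun y => legendreP μ (-y) * quasiDeriv (legendreP ν) y) (𝓝[<] 1) (𝓝 0) :=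
  tendsto_zero_of_isBigO_sub_rpow (by norm_num)
    (isBigO_mul_sub_rpow (isBigO_legendreP_neg μ) (isBigO_quasiDeriv_legendreP ν))

lemma tendsto_one_sub_mul_legendreP_neg (ν : ℂ) :
    Tendsto (fun y : ℝ => (1 - (y : ℂ)) * legendreP ν (-y)) (𝓝[<] 1) (𝓝 0) :=
  tendsto_zero_of_isBigO_sub_rpow (by norm_num)
    (isBigO_mul_sub_rpow isBigO_one_sub_ofReal_rpow_one (isBigO_legendreP_neg ν))

lemma isBigO_legendreP_neg_mul_legendreP_neg (μ ν : ℂ) :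
    (fun y => legendreP μ (-y) * legendreP ν (-y)) =O[𝓝[<] 1]
      fun y : ℝ => (1 - y) ^ (-(1 / 4) + -(1 / 4) : ℝ) :=
  isBigO_mul_sub_rpow (isBigO_legendreP_neg μ) (isBigO_legendreP_neg ν)

lemma tendsto_one_sub_mul_legendreP_neg_mul_legendreP_neg (μ ν : ℂ) :
    Tendsto (fun y : ℝ => (1 - (y : ℂ)) * (legendreP μ (-y) * legendreP ν (-y))) (𝓝[<] 1) (𝓝 0) :=
  tendsto_zero_of_isBigO_sub_rpow (by norm_num) (isBigO_mul_sub_rpow isBigO_one_sub_ofReal_rpow_one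
    (isBigO_legendreP_neg_mul_legendreP_neg μ ν))

-- The only nonzero boundary contribution: `P_ν` has a logarithmic singularity at `-1`.
lemma tendsto_quasiDeriv_legendreP_neg (ν : ℂ) :
    Tendsto (fun y => quasiDeriv (legendreP ν) (-y)) (𝓝[<] 1)
      (𝓝 (2 * Complex.sin (ν * π) / π)) := by
  have hcont : Continuous fun y : ℝ => √((1 - -y) / 2) := by fun_prop
  have hk : Tendsto (fun y : ℝ => √((1 - -y) / 2)) (𝓝[<] 1) (𝓝[<] 1) := by
    refine tendsto_nhdsWithin_iff.2 ⟨?_, ?_⟩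
    · convert (hcont.tendsto 1).mono_left nhdsWithin_le_nhds using 2
      norm_num
    · filter_upwards [Ioo_mem_nhdsLT (by norm_num : (-1 : ℝ) < 1)] with y hy
      exact (sqrt_half_one_sub_mem_Ioo (neg_mem_Ioo_neg_one_one hy)).2
  have hlim := ((tendsto_mul_legendreSinHalf_sub_one_add ν).comp hk).sub
    ((tendsto_one_sub_mul_legendreP_neg ν).const_mul ν)
  rw [mul_zero, sub_zero] at hlim
  refine hlim.congr' ?_
  filter_upwards [Ioo_mem_nhdsLT (by norm_num : (-1 : ℝ) < 1)] with y hy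
  have hy' := neg_mem_Ioo_neg_one_one hy
  rw [Function.comp_apply, ← legendreP_eq_legendreSinHalf _ hy',
    ← legendreP_eq_legendreSinHalf _ hy', quasiDeriv_legendreP ν hy']
  push_cast
  ring

lemma tendsto_ofReal_nhdsLT_one : Tendsto (fun y : ℝ => (y : ℂ)) (𝓝[<] 1) (𝓝 1) := by
  simpa using (Complex.continuous_ofReal.tendsto 1).mono_left nhdsWithin_le_nhds

/-! ### The recursion -/

lemma clebschGordanPrimitive_eq (μ ν : ℂ) (x : ℝ) :
    clebschGordanPrimitive μ ν x = (2 * μ + 1) *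
      ((2 * (ν * (ν + 1)) - μ * (μ + 1)) * (1 - (x : ℂ) ^ 2)
          * legendreP μ x * legendreP ν x * legendreP ν (-x)
        - quasiDeriv (legendreP μ) x * (quasiDeriv (legendreP ν) x * legendreP ν (-x)
          - legendreP ν x * quasiDeriv (legendreP ν) (-x))
        - 2 * legendreP μ x * quasiDeriv (legendreP ν) x * quasiDeriv (legendreP ν) (-x)) := by
  rw [clebschGordanPrimitive, legendreConcomitant, quasiDeriv_comp_neg]
  ring

lemma tendsto_clebschGordanPrimitive_one (μ ν : ℂ) :
    Tendsto (clebschGordanPrimitive μ ν) (𝓝[<] 1) (𝓝 0) := by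
  have hμ := tendsto_legendreP μ
  have hν := tendsto_legendreP ν
  have hθμ := tendsto_quasiDeriv_legendreP μ
  have hθν := tendsto_quasiDeriv_legendreP ν
  have hθν' := tendsto_quasiDeriv_legendreP_neg ν
  have hprod := (((((tendsto_ofReal_nhdsLT_one.const_add 1).const_mul
    (2 * (ν * (ν + 1)) - μ * (μ + 1))).mul hμ).mul hν).mul (tendsto_one_sub_mul_legendreP_neg ν))
  have hθ := hθμ.mul ((tendsto_legendreP_neg_mul_quasiDeriv ν ν).sub (hν.mul hθν'))
  have hlim := ((hprod.sub hθ).sub (((hμ.mul hθν).mul hθν').const_mul 2)).const_mul (2 * μ + 1)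
  simp only [mul_zero, zero_mul, sub_zero] at hlim
  refine hlim.congr fun y => ?_
  rw [clebschGordanPrimitive_eq]
  ring

lemma tendsto_clebschGordanPrimitive_neg_one (μ ν : ℂ) :
    Tendsto (clebschGordanPrimitive μ ν) (𝓝[>] (-1))
      (𝓝 (-((2 * μ + 1) * (2 * Complex.sin (μ * π) / π) * (2 * Complex.sin (ν * π) / π)))) := by
  have hν := tendsto_legendreP ν
  have hθμ' := tendsto_quasiDeriv_legendreP_neg μ
  have hθν' := tendsto_quasiDeriv_legendreP_neg ν
  have hprod := ((((tendsto_ofReal_nhdsLT_one.const_add 1).const_mul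
    (2 * (ν * (ν + 1)) - μ * (μ + 1))).mul hν).mul
      (tendsto_one_sub_mul_legendreP_neg_mul_legendreP_neg μ ν))
  have hθ := hθμ'.mul ((hθν'.mul hν).sub (tendsto_legendreP_neg_mul_quasiDeriv ν ν))
  have hlim := ((hprod.sub hθ).sub
    (((tendsto_legendreP_neg_mul_quasiDeriv μ ν).mul hθν').const_mul 2)).const_mul (2 * μ + 1)
  simp only [mul_zero, zero_mul, sub_zero, mul_one, zero_sub, mul_neg, ← mul_assoc] at hlim
  refine (hlim.comp tendsto_neg_nhdsGT_neg).congr fun x => ?_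
  rw [clebschGordanPrimitive_eq]
  simp only [Function.comp_apply, neg_neg]
  push_cast
  ring

lemma continuousOn_legendreP (ν : ℂ) : ContinuousOn (legendreP ν) (Ioo (-1) 1) := fun _ hx =>
  (hasDerivAt_legendreP ν hx).continuousAt.continuousWithinAt

lemma intervalIntegrable_legendreP_mul_mul (μ ν : ℂ) :
    IntervalIntegrable (fun x => legendreP μ x * legendreP ν x * legendreP ν (-x))
      volume (-1) 1 := by
  set f : ℝ → ℂ := fun x => legendreP μ x * legendreP ν x * legendreP ν (-x) with hf
  have hneg : MapsTo Neg.neg (Ioo (-1 : ℝ) 1) (Ioo (-1) 1) := fun _ => neg_mem_Ioo_neg_one_one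
  have hcont : ContinuousOn f (Ioo (-1) 1) :=
    ((continuousOn_legendreP μ).mul (continuousOn_legendreP ν)).mul
      ((continuousOn_legendreP ν).comp continuousOn_neg hneg)
  have hsub : Ico 0 1 ⊆ Ioo (-1 : ℝ) 1 := Ico_subset_Ioo_left (by norm_num)
  have hbdd (ν : ℂ) : legendreP ν =O[𝓝[<] 1] fun _ => (1 : ℝ) := (tendsto_legendreP ν).isBigO_one ℝ
  have hright : IntervalIntegrable f volume 0 1 := by
    refine intervalIntegrable_of_isBigO_sub_rpow one_pos (hcont.mono hsub)
      (by norm_num : (-1 : ℝ) < -(1 / 4)) ?_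
    simpa using ((hbdd μ).mul (hbdd ν)).mul (isBigO_legendreP_neg ν)
  have hleft : IntervalIntegrable (fun x => f (-x)) volume 0 1 := by
    refine intervalIntegrable_of_isBigO_sub_rpow one_pos
      ((hcont.comp continuousOn_neg hneg).mono hsub)
      (by norm_num : (-1 : ℝ) < -(1 / 4) + -(1 / 4)) ?_
    simpa [hf] using (isBigO_legendreP_neg_mul_legendreP_neg μ ν).mul (hbdd ν)
  have hleft' : IntervalIntegrable f volume (-1) 0 := by
    simpa using (hleft.comp_sub_left 0).symm
  exact hleft'.trans hright

/-- Recursion for generalized Clebsch–Gordan integrals. -/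
theorem stmt_4 (μ ν : ℂ) :
    (μ+1)^2 * ((μ+1)^2 - (2*ν+1)^2) * T (μ+1) ν
      - μ^2 * (μ^2 - (2*ν+1)^2) * T (μ-1) ν
    = 4 * (2*μ+1) * Complex.sin (μ * (π:ℂ)) * Complex.sin (ν * (π:ℂ)) / (π:ℂ)^2 := by
  have hplus := (intervalIntegrable_legendreP_mul_mul (μ + 1) ν).const_mul
    ((μ + 1) ^ 2 * ((μ + 1) ^ 2 - (2 * ν + 1) ^ 2))
  have hminus := (intervalIntegrable_legendreP_mul_mul (μ - 1) ν).const_mul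
    (μ ^ 2 * (μ ^ 2 - (2 * ν + 1) ^ 2))
  have hboundary := integral_eq_sub_of_hasDerivAt_of_tendsto (by norm_num : (-1 : ℝ) < 1)
    (fun x hx => hasDerivAt_clebschGordanPrimitive μ ν hx) (hplus.sub hminus)
    (tendsto_clebschGordanPrimitive_neg_one μ ν) (tendsto_clebschGordanPrimitive_one μ ν)
  rw [integral_sub hplus hminus, intervalIntegral.integral_const_mul,
    intervalIntegral.integral_const_mul, ← T, ← T] at hboundary
  rw [hboundary]
  ring
end
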